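/- arXiv:1711.03655 — 2 statements merged into one kernel-verified Lean document; each statement's English description precedes it below -/
import Mathlib

section
/- Let (R, m) be a regular local ring of dimension n, and I an ideal such that R/I is equidimensional of dimension d ≥ 2. Fix 1 ≤ i ≤ d−1. Then every prime p in the support of the local cohomology module H^{n−i}_I(R) satisfies ht_R(p) ≥ n − i + 1; equivalently, dim Supp_R H^{n−i}_I(R) ≤ i − 1. -/
open IsLocalRing CategoryTheory

noncomputable section

universe u

/-!
Local cohomology is `H^j_I(N) = colim_t Ext^j(R / I ^ t, N)`. Let `p` be a prime with `R_p` regular.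
Since `R_p` has global dimension `ht p`, all `Ext^j` with `j > ht p` vanish at `p`, so `ht p ≥ j` on
the support of `H^j_I(N)`. Suppose `ht p = j` and `p` is not minimal over `I`. The completion of
`R_p` is a domain, so Chevalley's theorem on descending chains of ideals shows that each power of
`I R_p` contains the saturation of a higher one. The quotient of `R_p` by a saturated ideal has a
nonzerodivisor `y` in the maximal ideal; multiplication by `y` is then surjective on its `Ext^j`
into `N`, because the next `Ext` vanishes, and Nakayama's lemma kills this `Ext^j`. Hence
`H^j_I(N)_p = 0`, which is the Hartshorne–Lichtenbaum vanishing theorem. Equidimensionality rules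
out the minimal primes of `I`: their height is at most `n - d < n - i`.
-/

section AdicCompletion

lemma exists_mvPowerSeries_ringHom_X_eq {A B : Type*} [CommRing A] [CommRing B] (f : A →+* B)
    (K : Ideal B) [IsAdicComplete K B] {σ : Type*} [Finite σ] (b : σ → B) (hb : ∀ s, b s ∈ K) :
    ∃ g : MvPowerSeries σ A →+* B, (∀ a, g (MvPowerSeries.C a) = f a) ∧
      ∀ s, g (MvPowerSeries.X s) = b s := by
  let : WithIdeal A := ⟨⊥⟩
  let : WithIdeal B := ⟨K⟩
  obtain ⟨_, _⟩ := (IsAdic.isAdicComplete_iff (I := K) rfl).mp ‹_›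
  have hmap : (⊥ : Ideal A).map f ≤ K := Ideal.map_bot.trans_le bot_le
  have hf : Continuous f := (WithIdeal.uniformContinuous_of_map_le hmap).continuous
  have hb' : MvPowerSeries.HasEval b :=
    ⟨fun s ↦ ?_, by simp [Filter.cofinite_eq_bot]⟩
  · exact ⟨MvPowerSeries.eval₂Hom hf hb',
      fun a ↦ by rw [MvPowerSeries.coe_eval₂Hom, MvPowerSeries.eval₂_C],
      fun s ↦ by rw [MvPowerSeries.coe_eval₂Hom, MvPowerSeries.eval₂_X]⟩
  · exact (K.hasBasis_nhds_zero_adic.tendsto_right_iff).mpr fun n _ ↦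
      Filter.eventually_atTop.mpr ⟨n, fun m hm ↦
        Ideal.pow_le_pow_right hm (Ideal.pow_mem_pow (hb s) m)⟩

lemma isNoetherianRing_of_isAdicComplete {A B : Type*} [CommRing A] [IsNoetherianRing A]
    [CommRing B] (f : A →+* B) (K : Ideal B) [IsAdicComplete K B] (hK : K.FG)
    (hf : Function.Surjective ((Ideal.Quotient.mk K).comp f)) : IsNoetherianRing B := by
  obtain ⟨s, rfl⟩ := hK
  obtain ⟨g, hgC, hgX⟩ := exists_mvPowerSeries_ringHom_X_eq f (Ideal.span (s : Set B))
    (fun b : s ↦ b.1) fun b ↦ Ideal.subset_span b.2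
  have hmap : (Ideal.span (Set.range MvPowerSeries.X)).map g = Ideal.span (s : Set B) := by
    rw [Ideal.map_span, ← Set.range_comp, funext hgX (f := g ∘ MvPowerSeries.X)]
    simp
  have hcomp : Function.Surjective
      ((Ideal.Quotient.mk ((Ideal.span (Set.range MvPowerSeries.X)).map g)).comp g) := by
    rw [hmap]
    exact fun y ↦ (hf y).imp' MvPowerSeries.C fun a ha ↦ by simpa [hgC] using ha
  have : IsHausdorff ((Ideal.span (Set.range MvPowerSeries.X)).map g) B := by
    rw [hmap]; infer_instance
  exact isNoetherianRing_of_surjective _ _ g (surjective_of_mk_map_comp_surjective g hcomp)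

instance isNoetherianRing_adicCompletion {A : Type*} [CommRing A] [IsNoetherianRing A]
    (I : Ideal A) : IsNoetherianRing (AdicCompletion I A) := by
  have hI := I.fg_of_isNoetherianRing
  have := AdicCompletion.isAdicComplete_self I hI
  refine isNoetherianRing_of_isAdicComplete (algebraMap A (AdicCompletion I A))
    (I.map (algebraMap A (AdicCompletion I A))) (hI.map _) fun y ↦ ?_
  obtain ⟨b, rfl⟩ := Ideal.Quotient.mk_surjective y
  obtain ⟨a, ha⟩ := Ideal.Quotient.mk_surjective (AdicCompletion.evalOneₐ I b)
  refine ⟨a, ?_⟩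
  rw [RingHom.comp_apply, Ideal.Quotient.eq, ← AdicCompletion.ker_evalOneₐ_eq_map I hI,
    RingHom.mem_ker, map_sub, sub_eq_zero]
  exact (RingHom.congr_fun (AdicCompletion.evalOneₐ_comp_algebraMap_eq_mk I) a).trans ha

end AdicCompletion

section RegularLocalRing

lemma isLocalRing_quotient_span_singleton {A : Type*} [CommRing A] [IsLocalRing A] {x : A}
    (hx : x ∈ maximalIdeal A) : IsLocalRing (A ⧸ Ideal.span {x}) :=
  have := Ideal.Quotient.nontrivial_iff.mpr fun h ↦
    (mem_maximalIdeal x).mp hx (Ideal.span_singleton_eq_top.mp h)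
  .of_surjective' (Ideal.Quotient.mk _) Ideal.Quotient.mk_surjective

lemma exists_span_insert_erase_eq_maximalIdeal {A : Type*} [CommRing A] [IsLocalRing A]
    [DecidableEq A] {s : Finset A} (hs : Ideal.span (s : Set A) = maximalIdeal A) {x : A}
    (hx : x ∈ maximalIdeal A) (hx2 : x ∉ maximalIdeal A ^ 2) :
    ∃ y ∈ s, Ideal.span (insert x (s.erase y : Set A)) = maximalIdeal A := by
  obtain ⟨c, -, hc⟩ := Submodule.mem_span_finset.mp (hs ▸ hx : x ∈ Ideal.span (s : Set A))
  obtain ⟨y, hy, hcy⟩ : ∃ y ∈ s, c y ∉ maximalIdeal A := by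
    by_contra! hcon
    refine hx2 (hc ▸ pow_two (maximalIdeal A) ▸ Ideal.sum_mem _ fun y hy ↦ ?_)
    exact Ideal.mul_mem_mul (hcon y hy) (hs ▸ Ideal.subset_span hy)
  have hsub : (s.erase y : Set A) ⊆ s := by simp
  refine ⟨y, hy, le_antisymm (Ideal.span_le.mpr (Set.insert_subset hx fun z hz ↦
    hs ▸ Ideal.subset_span (hsub hz))) (hs ▸ Ideal.span_le.mpr fun z hz ↦ ?_)⟩
  obtain rfl | hzy := eq_or_ne z y
  · have hcz : c z * z = x - ∑ w ∈ s.erase z, c w • w := by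
      rw [← hc, ← Finset.add_sum_erase _ _ hy, add_sub_cancel_right, smul_eq_mul]
    refine (Ideal.unit_mul_mem_iff_mem _ (notMem_maximalIdeal.mp hcy)).mp (hcz ▸ sub_mem ?_ ?_)
    · exact Ideal.subset_span (Set.mem_insert _ _)
    · exact Ideal.sum_mem _ fun w hw ↦
        Ideal.mul_mem_left _ _ (Ideal.subset_span (Set.mem_insert_of_mem _ hw))
  · exact Ideal.subset_span (Set.mem_insert_of_mem _ (Finset.mem_erase.mpr ⟨hzy, hz⟩))

variable {A : Type*} [CommRing A]

lemma spanFinrank_maximalIdeal_quotient_add_one_le [IsLocalRing A] [IsNoetherianRing A] {x : A}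
    [IsLocalRing (A ⧸ Ideal.span {x})] (hx : x ∈ maximalIdeal A)
    (hx2 : x ∉ maximalIdeal A ^ 2) :
    (maximalIdeal (A ⧸ Ideal.span {x})).spanFinrank + 1 ≤ (maximalIdeal A).spanFinrank := by
  classical
  obtain ⟨s, hcard, hs⟩ :=
    Submodule.FG.exists_span_finset_card_eq_spanFinrank (maximalIdeal A).fg_of_isNoetherianRing
  obtain ⟨y, hy, hspan⟩ := exists_span_insert_erase_eq_maximalIdeal hs hx hx2
  set π := Ideal.Quotient.mk (Ideal.span {x})
  have hπx : π x = 0 := Ideal.Quotient.eq_zero_iff_mem.mpr (Ideal.mem_span_singleton_self x)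
  rw [← hcard, ← map_maximalIdeal_of_surjective π Ideal.Quotient.mk_surjective, ← hspan,
    Ideal.map_span, Set.image_insert_eq, hπx, Ideal.span_insert_zero,
    ← Finset.card_erase_add_one hy]
  gcongr
  calc
    _ ≤ (π '' (s.erase y : Set A)).ncard :=
      Submodule.spanFinrank_span_le_ncard_of_finite ((s.erase y).finite_toSet.image π)
    _ ≤ _ := (Set.ncard_image_le (s.erase y).finite_toSet).trans_eq (Set.ncard_coe_finset _)

lemma ringKrullDim_le_ringKrullDim_quotient_span_singleton_add_one [IsLocalRing A]
    [IsNoetherianRing A] {x : A} (hx : x ∈ maximalIdeal A) :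
    ringKrullDim A ≤ ringKrullDim (A ⧸ Ideal.span {x}) + 1 := by
  have := ringKrullDim_le_ringKrullDim_quotient_add_card ({x} : Finset A)
    (by simpa [ringJacobson_eq_maximalIdeal] using hx)
  rwa [Finset.coe_singleton, Finset.card_singleton, Nat.cast_one] at this

variable [IsRegularLocalRing A]

lemma isRegularLocalRing_quotient_span_singleton {x : A} (hx : x ∈ maximalIdeal A)
    (hx2 : x ∉ maximalIdeal A ^ 2) : IsRegularLocalRing (A ⧸ Ideal.span {x}) := by
  have := isLocalRing_quotient_span_singleton hx
  refine .of_spanFinrank_maximalIdeal_le _ (ENat.WithBot.add_le_add_one_right_iff.mp ?_)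
  calc ((maximalIdeal (A ⧸ Ideal.span {x})).spanFinrank : WithBot ℕ∞) + 1
    _ ≤ (maximalIdeal A).spanFinrank := by
      exact_mod_cast spanFinrank_maximalIdeal_quotient_add_one_le hx hx2
    _ = ringKrullDim A := IsRegularLocalRing.spanFinrank_maximalIdeal
    _ ≤ ringKrullDim (A ⧸ Ideal.span {x}) + 1 :=
      ringKrullDim_le_ringKrullDim_quotient_span_singleton_add_one hx

lemma ringKrullDim_quotient_span_singleton_add_one {x : A} (hx : x ∈ maximalIdeal A)
    (hx2 : x ∉ maximalIdeal A ^ 2) :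
    ringKrullDim (A ⧸ Ideal.span {x}) + 1 = ringKrullDim A := by
  have := isRegularLocalRing_quotient_span_singleton hx hx2
  refine le_antisymm ?_ (ringKrullDim_le_ringKrullDim_quotient_span_singleton_add_one hx)
  rw [← IsRegularLocalRing.spanFinrank_maximalIdeal, ← IsRegularLocalRing.spanFinrank_maximalIdeal]
  exact_mod_cast spanFinrank_maximalIdeal_quotient_add_one_le hx hx2

end RegularLocalRing

section PrimeAvoidance

variable {A : Type*} [CommRing A] [IsLocalRing A]

lemma exists_mem_maximalIdeal_notMem_sq_notMem_primes [IsNoetherianRing A]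
    (hm : maximalIdeal A ≠ ⊥) {S : Set (Ideal A)} (hS : S.Finite) (hprime : ∀ P ∈ S, P.IsPrime)
    (hne : ∀ P ∈ S, P ≠ maximalIdeal A) :
    ∃ x ∈ maximalIdeal A, x ∉ maximalIdeal A ^ 2 ∧ ∀ P ∈ S, x ∉ P := by
  classical
  by_contra! hcon
  have hcover : (maximalIdeal A : Set A) ⊆
      ⋃ P ∈ (insert (maximalIdeal A ^ 2) hS.toFinset : Set (Ideal A)), (P : Set A) := by
    intro x hx
    by_cases hx2 : x ∈ maximalIdeal A ^ 2
    · exact Set.mem_biUnion (Set.mem_insert _ _) hx2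
    · obtain ⟨P, hP, hxP⟩ := hcon x hx hx2
      exact Set.mem_biUnion (Set.mem_insert_of_mem _ (hS.mem_toFinset.mpr hP)) hxP
  rw [← Finset.coe_insert, Ideal.subset_union_prime (maximalIdeal A ^ 2) (maximalIdeal A ^ 2)
    fun P hP hP2 _ ↦ hprime P (by simpa [hP2] using hP)] at hcover
  obtain ⟨P, hP, hle⟩ := hcover
  obtain rfl | hP := Finset.mem_insert.mp hP
  · exact hm (Submodule.eq_bot_of_le_smul_of_le_jacobson_bot (maximalIdeal A) _
      (IsNoetherian.noetherian _) (by rwa [smul_eq_mul, ← pow_two]) (maximalIdeal_le_jacobson _))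
  · rw [hS.mem_toFinset] at hP
    exact hne P hP (le_antisymm (le_maximalIdeal (hprime P hP).ne_top) hle)

end PrimeAvoidance

section RegularLocalRingIsDomain

lemma isField_of_ringKrullDim_eq_zero {A : Type*} [CommRing A] [IsRegularLocalRing A]
    (h : ringKrullDim A = 0) : IsField A := by
  refine isField_iff_maximalIdeal_eq.mpr ?_
  rw [← Submodule.spanFinrank_eq_zero_iff_eq_bot (maximalIdeal A).fg_of_isNoetherianRing]
  exact_mod_cast IsRegularLocalRing.spanFinrank_maximalIdeal.trans h

lemma maximalIdeal_ne_bot_of_ringKrullDim_ne_zero {A : Type*} [CommRing A] [IsLocalRing A]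
    (h : ringKrullDim A ≠ 0) : maximalIdeal A ≠ ⊥ :=
  fun hbot ↦ h (ringKrullDim_eq_zero_of_isField (isField_iff_maximalIdeal_eq.mpr hbot))

lemma isDomain_of_isPrime_span_singleton {A : Type*} [CommRing A] [IsLocalRing A]
    [IsNoetherianRing A] {x : A} (hx : x ∈ maximalIdeal A) (hprime : (Ideal.span {x}).IsPrime)
    (hmin : ∀ P ∈ minimalPrimes A, x ∉ P) : IsDomain A := by
  obtain ⟨P, hP, hPx⟩ := Ideal.exists_minimalPrimes_le (bot_le (a := Ideal.span {x}))
  have hPprime : P.IsPrime := hP.1.1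
  suffices hbot : P = ⊥ by
    subst hbot
    exact IsDomain.of_bot_isPrime A
  refine Submodule.eq_bot_of_le_smul_of_le_jacobson_bot (maximalIdeal A) _
    (IsNoetherian.noetherian _) (fun y hy ↦ ?_) (maximalIdeal_le_jacobson _)
  obtain ⟨a, rfl⟩ := Ideal.mem_span_singleton'.mp (hPx hy)
  rw [mul_comm]
  exact Ideal.mul_mem_mul hx ((hPprime.mem_or_mem hy).resolve_right (hmin P hP))

lemma isDomain_of_ringKrullDim_eq (n : ℕ) : ∀ (A : Type u) [CommRing A] [IsRegularLocalRing A],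
    ringKrullDim A = n → IsDomain A := by
  induction n with
  | zero => exact fun A _ _ h ↦ (isField_of_ringKrullDim_eq_zero h).isDomain
  | succ n ih =>
    intro A _ _ hdim
    have hdim0 : ringKrullDim A ≠ 0 := by rw [hdim]; exact_mod_cast n.succ_ne_zero
    obtain ⟨x, hx, hx2, hmin⟩ := exists_mem_maximalIdeal_notMem_sq_notMem_primes
      (maximalIdeal_ne_bot_of_ringKrullDim_ne_zero hdim0)
      (minimalPrimes.finite_of_isNoetherianRing A) (fun P hP ↦ hP.1.1) <| by
        rintro _ hmin rfl
        rw [← maximalIdeal_height_eq_ringKrullDim, Ideal.height_eq_zero_iff.mpr hmin] at hdim0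
        exact hdim0 rfl
    have := isRegularLocalRing_quotient_span_singleton hx hx2
    have := ih (A ⧸ Ideal.span {x}) (by
      simpa [hdim] using ringKrullDim_quotient_span_singleton_add_one hx hx2)
    exact isDomain_of_isPrime_span_singleton hx ((Ideal.Quotient.isDomain_iff_prime _).mp this) hmin

instance isDomain_of_isRegularLocalRing (A : Type u) [CommRing A] [IsRegularLocalRing A] :
    IsDomain A :=
  isDomain_of_ringKrullDim_eq _ A IsRegularLocalRing.spanFinrank_maximalIdeal.symm

end RegularLocalRingIsDomain

section ProjectiveDimension

variable {A : Type u} [CommRing A] {M N F : Type u} [AddCommGroup M] [Module A M]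
  [AddCommGroup N] [Module A N] [AddCommGroup F] [Module A F]

lemma hasProjectiveDimensionLE_succ_iff_ker [Module.Projective A F] {f : F →ₗ[A] M}
    (hf : Function.Surjective f) (n : ℕ) :
    HasProjectiveDimensionLE (ModuleCat.of A M) (n + 1) ↔
      HasProjectiveDimensionLE (ModuleCat.of A (LinearMap.ker f)) n :=
  (LinearMap.shortExact_shortComplexKer hf).hasProjectiveDimensionLT_X₃_iff n
    ((IsProjective.iff_projective F).mp inferInstance)

lemma hasProjectiveDimensionLE_congr (e : M ≃ₗ[A] N) (n : ℕ) :
    HasProjectiveDimensionLE (ModuleCat.of A M) n ↔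
      HasProjectiveDimensionLE (ModuleCat.of A N) n :=
  ⟨fun _ ↦ hasProjectiveDimensionLT_of_iso e.toModuleIso (n + 1),
    fun _ ↦ hasProjectiveDimensionLT_of_iso e.symm.toModuleIso (n + 1)⟩

lemma hasProjectiveDimensionLE_zero_iff_free [IsLocalRing A] [Module.Finite A M] :
    HasProjectiveDimensionLE (ModuleCat.of A M) 0 ↔ Module.Free A M := by
  rw [← projective_iff_hasProjectiveDimensionLE_zero, ← IsProjective.iff_projective]
  exact ⟨fun _ ↦ Module.free_of_flat_of_isLocalRing, fun _ ↦ inferInstance⟩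

lemma quotSMulTop_map_subtype_ker_injective {x : A} (hx : IsSMulRegular M x) (f : F →ₗ[A] M) :
    Function.Injective (QuotSMulTop.map x (LinearMap.ker f).subtype) := by
  have hexact := QuotSMulTop.map_first_exact_on_four_term_exact_of_isSMulRegular_last
    (f₁ := (0 : M →ₗ[A] LinearMap.ker f)) (f₂ := (LinearMap.ker f).subtype) (f₃ := f)
    (LinearMap.exact_zero_iff_injective _ _ |>.mpr (LinearMap.ker f).injective_subtype)
    (LinearMap.exact_subtype_ker_map f) hx
  rw [map_zero] at hexact
  exact (LinearMap.exact_zero_iff_injective _ _).mp hexact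

/-- The map `M / xM → N / xN` induced by `f : M → N`, as a linear map over `A / xA`. -/
abbrev quotSMulTopMap (x : A) (f : M →ₗ[A] N) :
    QuotSMulTop x M →ₗ[A ⧸ Ideal.span {x}] QuotSMulTop x N :=
  (QuotSMulTop.map x f).extendScalarsOfSurjective Ideal.Quotient.mk_surjective

lemma nonempty_quotSMulTop_ker_linearEquiv {x : A} (hx : IsSMulRegular M x) {f : F →ₗ[A] M}
    (hf : Function.Surjective f) :
    Nonempty (QuotSMulTop x (LinearMap.ker f) ≃ₗ[A ⧸ Ideal.span {x}]
      LinearMap.ker (quotSMulTopMap x f)) := by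
  have hinj : Function.Injective (quotSMulTopMap x (LinearMap.ker f).subtype) :=
    quotSMulTop_map_subtype_ker_injective hx f
  have hexact : Function.Exact (quotSMulTopMap x (LinearMap.ker f).subtype) (quotSMulTopMap x f) :=
    QuotSMulTop.map_exact x (LinearMap.exact_subtype_ker_map f) hf
  exact ⟨(LinearEquiv.ofInjective _ hinj).trans
    (LinearEquiv.ofEq _ _ (LinearMap.exact_iff.mp hexact).symm)⟩

lemma isSMulRegular_ker_of_pi {x : A} (hx : IsSMulRegular A x) {k : ℕ}
    (f : (Fin k → A) →ₗ[A] M) : IsSMulRegular (LinearMap.ker f) x :=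
  IsSMulRegular.submodule _ x (.pi fun _ ↦ hx)

lemma hasProjectiveDimensionLE_quotSMulTop_iff [IsLocalRing A] [IsNoetherianRing A] {x : A}
    (hx : x ∈ maximalIdeal A) (hreg : IsSMulRegular A x) (n : ℕ) [Module.Finite A M]
    (hM : IsSMulRegular M x) :
    HasProjectiveDimensionLE (ModuleCat.of (A ⧸ Ideal.span {x}) (QuotSMulTop x M)) n ↔
      HasProjectiveDimensionLE (ModuleCat.of A M) n := by
  have := isLocalRing_quotient_span_singleton hx
  induction n generalizing M with
  | zero =>
    have := Module.finitePresentation_of_finite A M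
    have := Module.Finite.of_restrictScalars_finite A (A ⧸ Ideal.span {x}) (QuotSMulTop x M)
    rw [hasProjectiveDimensionLE_zero_iff_free, hasProjectiveDimensionLE_zero_iff_free]
    exact Module.free_quotSMulTop_iff_free _ _
      (by rwa [jacobson_eq_maximalIdeal _ bot_ne_top]) hM
  | succ n ih =>
    obtain ⟨k, f, hf⟩ := Module.Finite.exists_fin' A M
    obtain ⟨e⟩ := nonempty_quotSMulTop_ker_linearEquiv hM hf
    have ihker := ih (M := LinearMap.ker f) (isSMulRegular_ker_of_pi hreg f)
    have hsurj : Function.Surjective (quotSMulTopMap x f) := QuotSMulTop.map_surjective x hf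
    exact (hasProjectiveDimensionLE_succ_iff_ker hsurj n).trans <|
      (hasProjectiveDimensionLE_congr e n).symm.trans <| ihker.trans <|
      (hasProjectiveDimensionLE_succ_iff_ker hf n).symm

lemma hasProjectiveDimensionLE_of_isRegularLocalRing (n : ℕ) :
    ∀ (A : Type u) [CommRing A] [IsRegularLocalRing A] (_ : ringKrullDim A = n) (M : Type u)
      [AddCommGroup M] [Module A M] [Module.Finite A M],
      HasProjectiveDimensionLE (ModuleCat.of A M) n := by
  induction n with
  | zero =>
    intro A _ _ hdim M _ _ _
    let := (isField_of_ringKrullDim_eq_zero hdim).toField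
    exact hasProjectiveDimensionLE_zero_iff_free.mpr inferInstance
  | succ n ih =>
    intro A _ _ hdim M _ _ _
    have hdim0 : ringKrullDim A ≠ 0 := by rw [hdim]; exact_mod_cast n.succ_ne_zero
    obtain ⟨x, hx, hx2, -⟩ := exists_mem_maximalIdeal_notMem_sq_notMem_primes
      (maximalIdeal_ne_bot_of_ringKrullDim_ne_zero hdim0) (S := ∅) (by simp) (by simp) (by simp)
    have hreg : IsSMulRegular A x :=
      (IsRegular.of_ne_zero (ne_of_mem_of_not_mem (zero_mem _) hx2).symm).left
    obtain ⟨k, f, hf⟩ := Module.Finite.exists_fin' A M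
    have := isRegularLocalRing_quotient_span_singleton hx hx2
    have := Module.Finite.of_restrictScalars_finite A (A ⧸ Ideal.span {x})
      (QuotSMulTop x (LinearMap.ker f))
    rw [hasProjectiveDimensionLE_succ_iff_ker hf,
      ← hasProjectiveDimensionLE_quotSMulTop_iff hx hreg n (isSMulRegular_ker_of_pi hreg f)]
    exact ih _ (by simpa [hdim] using ringKrullDim_quotient_span_singleton_add_one hx hx2) _

end ProjectiveDimension

section Localization

lemma exists_surjective_pi_ker_le_maximalIdeal (A M : Type*) [CommRing A] [IsLocalRing A]
    [AddCommGroup M] [Module A M] [Module.Finite A M] :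
    ∃ (k : ℕ) (f : (Fin k → A) →ₗ[A] M), Function.Surjective f ∧
      ∀ v ∈ LinearMap.ker f, ∀ i, v i ∈ maximalIdeal A := by
  let b := Module.finBasis (ResidueField A) (TensorProduct A (ResidueField A) M)
  obtain ⟨w, hw⟩ := (TensorProduct.mk_surjective A M (ResidueField A)
    Ideal.Quotient.mk_surjective).comp_left b
  refine ⟨_, Fintype.linearCombination A w, ?_, fun v hv i ↦ ?_⟩
  · rw [← LinearMap.range_eq_top, Fintype.range_linearCombination]
    exact span_eq_top_of_tmul_eq_basis w b (congrFun hw)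
  · have hsum : ∑ j, residue A (v j) • b j = 0 := by
      rw [← hw, ← map_zero (TensorProduct.mk A (ResidueField A) M 1), ← hv,
        Fintype.linearCombination_apply, map_sum]
      exact Finset.sum_congr rfl fun j _ ↦ (by simpa using algebraMap_smul (ResidueField A) (v j) _)
    exact (residue_eq_zero_iff _).mp (Fintype.linearIndependent_iff.mp b.linearIndependent _ hsum i)

lemma eq_zero_of_smul_eq_zero_of_free {A M : Type*} [CommRing A] [AddCommGroup M] [Module A M]
    [Module.Free A M] [Nontrivial M] {z : A} (hz : ∀ v : M, z • v = 0) : z = 0 := by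
  obtain ⟨i⟩ := (Module.Free.chooseBasis A M).index_nonempty
  simpa using congrArg (fun v ↦ (Module.Free.chooseBasis A M).repr v i)
    (hz (Module.Free.chooseBasis A M i))

lemma free_of_hasProjectiveDimensionLE_of_mul_eq_zero {A : Type u} [CommRing A] [IsLocalRing A]
    [IsNoetherianRing A] {z : A} (hz : z ≠ 0) (hmz : ∀ a ∈ maximalIdeal A, z * a = 0)
    {M : Type u} [AddCommGroup M] [Module A M] [Module.Finite A M] {n : ℕ}
    (hM : HasProjectiveDimensionLE (ModuleCat.of A M) n) : Module.Free A M := by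
  induction n generalizing M with
  | zero => exact hasProjectiveDimensionLE_zero_iff_free.mp hM
  | succ n ih =>
    obtain ⟨k, f, hf, hker⟩ := exists_surjective_pi_ker_le_maximalIdeal A M
    have := ih ((hasProjectiveDimensionLE_succ_iff_ker hf n).mp hM)
    have hzker (v : LinearMap.ker f) : z • v = 0 :=
      Subtype.ext (funext fun i ↦ hmz _ (hker v.1 v.2 i))
    have : Subsingleton (LinearMap.ker f) := by
      by_contra! hne
      exact hz (eq_zero_of_smul_eq_zero_of_free (M := LinearMap.ker f) hzker)
    have hinj : Function.Injective f :=
      LinearMap.ker_eq_bot.mp (Submodule.subsingleton_iff_eq_bot.mp this)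
    exact Module.Free.of_equiv (LinearEquiv.ofBijective f ⟨hinj, hf⟩)

lemma spanFinrank_maximalIdeal_le_quotient_add_one {A : Type*} [CommRing A] [IsLocalRing A]
    [IsNoetherianRing A] (x : A) [IsLocalRing (A ⧸ Ideal.span {x})] :
    (maximalIdeal A).spanFinrank ≤ (maximalIdeal (A ⧸ Ideal.span {x})).spanFinrank + 1 := by
  classical
  let π := Ideal.Quotient.mk (Ideal.span {x})
  have hπ : Function.Surjective π := Ideal.Quotient.mk_surjective
  have hker : RingHom.ker π = Ideal.span {x} := Ideal.mk_ker
  obtain ⟨s, hcard, hs⟩ := Submodule.FG.exists_span_finset_card_eq_spanFinrank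
    (maximalIdeal (A ⧸ Ideal.span {x})).fg_of_isNoetherianRing
  obtain ⟨t, htcard, ht⟩ : ∃ t : Finset A, t.card ≤ s.card ∧ π '' t = s :=
    ⟨s.image (Function.surjInv hπ), Finset.card_image_le, by
      simp [Set.image_image, Function.surjInv_eq hπ]⟩
  have hspan : Ideal.span (insert x t : Set A) = maximalIdeal A := by
    have := IsLocalHom.of_surjective π hπ
    have hmap : (Ideal.span (t : Set A)).map π = maximalIdeal _ := by
      rw [Ideal.map_span, ht]
      exact hs
    rw [← maximalIdeal_comap π, ← hmap, Ideal.comap_map_of_surjective' π hπ, Ideal.span_insert,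
      sup_comm, hker]
  calc (maximalIdeal A).spanFinrank
    _ ≤ (insert x t : Set A).ncard := hspan ▸
      Submodule.spanFinrank_span_le_ncard_of_finite (t.finite_toSet.insert x)
    _ ≤ t.card + 1 := by simpa using Set.ncard_insert_le x (t : Set A)
    _ ≤ _ := by omega

lemma isRegularLocalRing_of_quotient_span_singleton {A : Type*} [CommRing A] [IsLocalRing A]
    [IsNoetherianRing A] {x : A} (hx : x ∈ maximalIdeal A) (hreg : IsSMulRegular A x)
    [IsRegularLocalRing (A ⧸ Ideal.span {x})] : IsRegularLocalRing A := by
  refine .of_spanFinrank_maximalIdeal_le _ ?_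
  rw [← ringKrullDim_quotient_span_singleton_succ_eq_ringKrullDim hreg hx,
    ← IsRegularLocalRing.spanFinrank_maximalIdeal (R := A ⧸ Ideal.span {x})]
  exact_mod_cast spanFinrank_maximalIdeal_le_quotient_add_one x

lemma exists_liftQ_comp_eq_id {A M N : Type*} [CommRing A] [AddCommGroup M] [Module A M]
    [AddCommGroup N] [Module A N] {q : M →ₗ[A] N} (hq : Function.Surjective q)
    {e : M} (hker : LinearMap.ker q = A ∙ e) {P : Submodule A M} (hP : P ≤ LinearMap.ker q)
    {I : Ideal A} (he : ∀ a ∈ I, a • e ∈ P) (l : M →ₗ[A] A ⧸ I) (hl : l e = 1) :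
    ∃ s : N →ₗ[A] M ⧸ P, P.liftQ q hP ∘ₗ s = LinearMap.id := by
  let ι : (A ⧸ I) →ₗ[A] M ⧸ P := I.liftQ (LinearMap.toSpanSingleton A _ (P.mkQ e))
    fun a ha ↦ (Submodule.Quotient.mk_eq_zero P).mpr (he a ha)
  have hι (a : A) : ι (Ideal.Quotient.mk I a) = P.mkQ (a • e) := rfl
  have hqe : q e = 0 := LinearMap.mem_ker.mp (hker ▸ Submodule.mem_span_singleton_self e)
  have hσ : LinearMap.ker q ≤ LinearMap.ker (P.mkQ - ι ∘ₗ l) := by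
    rw [hker, Submodule.span_singleton_le_iff_mem, LinearMap.mem_ker, LinearMap.sub_apply,
      LinearMap.comp_apply, hl, ← map_one (Ideal.Quotient.mk I), hι, one_smul, sub_self]
  refine ⟨(LinearMap.ker q).liftQ _ hσ ∘ₗ (q.quotKerEquivOfSurjective hq).symm,
    LinearMap.ext fun y ↦ ?_⟩
  obtain ⟨m, rfl⟩ := hq y
  obtain ⟨a, ha⟩ := Ideal.Quotient.mk_surjective (l m)
  have hm : (q.quotKerEquivOfSurjective hq).symm (q m) = (LinearMap.ker q).mkQ m :=
    (LinearEquiv.symm_apply_eq _).mpr rfl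
  simp [hm, ← ha, hι, hqe]

lemma exists_linearMap_maximalIdeal_eq_one {A : Type*} [CommRing A] [IsLocalRing A] {x : A}
    (hx : x ∈ maximalIdeal A) (hx2 : x ∉ maximalIdeal A ^ 2) :
    ∃ l : maximalIdeal A →ₗ[A] A ⧸ maximalIdeal A, l ⟨x, hx⟩ = 1 := by
  have hne : (maximalIdeal A).toCotangent ⟨x, hx⟩ ≠ 0 :=
    fun h ↦ hx2 ((Ideal.toCotangent_eq_zero _ _).mp h)
  obtain ⟨l, hl⟩ := Module.Projective.exists_dual_eq_one (ResidueField A)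
    (V := CotangentSpace A) hne
  exact ⟨(l.restrictScalars A) ∘ₗ (maximalIdeal A).toCotangent, hl⟩

-- Since `x ∉ 𝔪 ^ 2`, the surjection `𝔪 / x𝔪 → 𝔪 / xA` splits.
open scoped Pointwise in
lemma hasProjectiveDimensionLE_maximalIdeal_quotient {A : Type u} [CommRing A] [IsLocalRing A]
    {x : A} (hx : x ∈ maximalIdeal A) (hx2 : x ∉ maximalIdeal A ^ 2)
    [IsLocalRing (A ⧸ Ideal.span {x})] {n : ℕ}
    (h : HasProjectiveDimensionLE
      (ModuleCat.of (A ⧸ Ideal.span {x}) (QuotSMulTop x (maximalIdeal A))) n) :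
    HasProjectiveDimensionLE
      (ModuleCat.of (A ⧸ Ideal.span {x}) (maximalIdeal (A ⧸ Ideal.span {x}))) n := by
  let π := Ideal.Quotient.mk (Ideal.span {x})
  have hπ : Function.Surjective π := Ideal.Quotient.mk_surjective
  have := IsLocalHom.of_surjective π hπ
  let q : maximalIdeal A →ₗ[A] maximalIdeal (A ⧸ Ideal.span {x}) :=
    { toFun a := ⟨π a, map_nonunit π a.1 a.2⟩
      map_add' _ _ := rfl
      map_smul' _ _ := rfl }
  have hq : Function.Surjective q := by
    rintro ⟨b, hb⟩
    obtain ⟨a, rfl⟩ := hπ b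
    exact ⟨⟨a, maximalIdeal_comap π ▸ hb⟩, rfl⟩
  have hker : LinearMap.ker q = A ∙ (⟨x, hx⟩ : maximalIdeal A) := by
    ext a
    rw [LinearMap.mem_ker, Submodule.mem_span_singleton, ← Subtype.coe_inj]
    refine Ideal.Quotient.eq_zero_iff_mem.trans (Ideal.mem_span_singleton'.trans ?_)
    simp only [Subtype.ext_iff, Submodule.coe_smul, smul_eq_mul]
  have hP : x • (⊤ : Submodule A (maximalIdeal A)) ≤ LinearMap.ker q := by
    rw [hker]
    rintro _ ⟨b, -, rfl⟩
    exact Submodule.mem_span_singleton.mpr ⟨b, Subtype.ext (mul_comm _ _)⟩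
  obtain ⟨l, hl⟩ := exists_linearMap_maximalIdeal_eq_one hx hx2
  obtain ⟨s, hs⟩ := exists_liftQ_comp_eq_id hq hker hP
    (fun a ha ↦ ⟨⟨a, ha⟩, trivial, Subtype.ext (mul_comm _ _)⟩) l hl
  exact Retract.hasProjectiveDimensionLT (Y := ModuleCat.of _ (QuotSMulTop x (maximalIdeal A)))
    { i := ModuleCat.ofHom (s.extendScalarsOfSurjective hπ)
      r := ModuleCat.ofHom ((Submodule.liftQ _ q hP).extendScalarsOfSurjective hπ)
      retract := by
        ext a
        exact congrArg Subtype.val (LinearMap.congr_fun hs a) } _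

lemma maximalIdeal_notMem_associatedPrimes_of_hasProjectiveDimensionLE {A : Type u} [CommRing A]
    [IsLocalRing A] [IsNoetherianRing A] (hm : maximalIdeal A ≠ ⊥) {n : ℕ}
    (h : HasProjectiveDimensionLE (ModuleCat.of A (A ⧸ maximalIdeal A)) n) :
    maximalIdeal A ∉ associatedPrimes A A := by
  intro hass
  obtain ⟨-, z, hz⟩ := isAssociatedPrime_iff.mp hass
  have hmz (a : A) (ha : a ∈ maximalIdeal A) : z * a = 0 := by
    rw [hz, Submodule.mem_colon_singleton] at ha
    simpa [mul_comm] using ha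
  have hz0 : z ≠ 0 := by
    rintro rfl
    exact (maximalIdeal.isMaximal A).ne_top (by simp [hz])
  have hzm : z ∈ maximalIdeal A := (mem_maximalIdeal z).mpr fun hu ↦
    hm (eq_bot_iff.mpr fun a ha ↦ hu.mul_right_eq_zero.mp (hmz a ha))
  have := free_of_hasProjectiveDimensionLE_of_mul_eq_zero hz0 hmz h
  refine hz0 (eq_zero_of_smul_eq_zero_of_free (M := A ⧸ maximalIdeal A) fun v ↦ ?_)
  obtain ⟨a, rfl⟩ := Ideal.Quotient.mk_surjective v
  exact Ideal.Quotient.eq_zero_iff_mem.mpr (Ideal.mul_mem_right a _ hzm)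

lemma exists_isSMulRegular_notMem_sq_of_hasProjectiveDimensionLE {A : Type u} [CommRing A]
    [IsLocalRing A] [IsNoetherianRing A] (hm : maximalIdeal A ≠ ⊥) {n : ℕ}
    (h : HasProjectiveDimensionLE (ModuleCat.of A (A ⧸ maximalIdeal A)) n) :
    ∃ x ∈ maximalIdeal A, x ∉ maximalIdeal A ^ 2 ∧ IsSMulRegular A x := by
  have hass := maximalIdeal_notMem_associatedPrimes_of_hasProjectiveDimensionLE hm h
  obtain ⟨x, hx, hx2, hxass⟩ := exists_mem_maximalIdeal_notMem_sq_notMem_primes hm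
    (associatedPrimes.finite A A) (fun P hP ↦ hP.1) (fun P hP hPm ↦ hass (hPm ▸ hP))
  refine ⟨x, hx, hx2, ?_⟩
  change x ∈ {r : A | IsSMulRegular A r}
  rw [← Set.notMem_compl_iff, ← biUnion_associatedPrimes_eq_compl_regular A A]
  simpa using hxass

lemma isRegularLocalRing_of_maximalIdeal_eq_bot {A : Type*} [CommRing A] [IsLocalRing A]
    [IsNoetherianRing A] (hm : maximalIdeal A = ⊥) : IsRegularLocalRing A := by
  refine .of_spanFinrank_maximalIdeal_le _ ?_
  simpa [hm] using ringKrullDim_nonneg_of_nontrivial (R := A)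

lemma hasProjectiveDimensionLE_residueField_quotient {A : Type u} [CommRing A] [IsLocalRing A]
    [IsNoetherianRing A] {x : A} (hx : x ∈ maximalIdeal A) (hx2 : x ∉ maximalIdeal A ^ 2)
    (hreg : IsSMulRegular A x) [IsLocalRing (A ⧸ Ideal.span {x})] {n : ℕ}
    (h : HasProjectiveDimensionLE (ModuleCat.of A (A ⧸ maximalIdeal A)) (n + 1)) :
    HasProjectiveDimensionLE (ModuleCat.of (A ⧸ Ideal.span {x})
      ((A ⧸ Ideal.span {x}) ⧸ maximalIdeal (A ⧸ Ideal.span {x}))) (n + 1) := by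
  refine (hasProjectiveDimensionLE_succ_iff_ker (Submodule.mkQ_surjective _) n).mpr ?_
  have hker := (hasProjectiveDimensionLE_succ_iff_ker (Submodule.mkQ_surjective _) n).mp h
  rw [Submodule.ker_mkQ] at hker ⊢
  exact hasProjectiveDimensionLE_maximalIdeal_quotient hx hx2
    ((hasProjectiveDimensionLE_quotSMulTop_iff hx hreg n (hreg.submodule _)).mpr hker)

theorem isRegularLocalRing_of_hasProjectiveDimensionLE (d : ℕ) :
    ∀ (A : Type u) [CommRing A] [IsLocalRing A] [IsNoetherianRing A] (_ : ringKrullDim A = d)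
      {n : ℕ} (_ : HasProjectiveDimensionLE (ModuleCat.of A (A ⧸ maximalIdeal A)) n),
      IsRegularLocalRing A := by
  induction d with
  | zero =>
    intro A _ _ _ hdim n h
    refine isRegularLocalRing_of_maximalIdeal_eq_bot (by_contra fun hm ↦ ?_)
    obtain ⟨x, hx, -, hreg⟩ := exists_isSMulRegular_notMem_sq_of_hasProjectiveDimensionLE hm h
    have := isLocalRing_quotient_span_singleton hx
    have hpos := ringKrullDim_nonneg_of_nontrivial (R := A ⧸ Ideal.span {x})
    have hsucc := ringKrullDim_quotient_span_singleton_succ_eq_ringKrullDim hreg hx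
    have hle : ringKrullDim (A ⧸ Ideal.span {x}) + 1 ≤ 0 := (hsucc.trans hdim).le
    exact absurd ((add_le_add_left hpos 1).trans hle) (by decide)
  | succ d ih =>
    intro A _ _ _ hdim n h
    by_cases hm : maximalIdeal A = ⊥
    · exact isRegularLocalRing_of_maximalIdeal_eq_bot hm
    obtain ⟨x, hx, hx2, hreg⟩ := exists_isSMulRegular_notMem_sq_of_hasProjectiveDimensionLE hm h
    have := isLocalRing_quotient_span_singleton hx
    have hsucc := ringKrullDim_quotient_span_singleton_succ_eq_ringKrullDim hreg hx
    have := ih (A ⧸ Ideal.span {x}) (by simpa [hdim] using hsucc)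
      (hasProjectiveDimensionLE_residueField_quotient hx hx2 hreg
        (hasProjectiveDimensionLT_of_ge _ (n + 1) _ (Nat.le_succ _)))
    exact isRegularLocalRing_of_quotient_span_singleton hx hreg

/-- The localization of `A / p` at `p` is the residue field of `A_p`, written as a quotient
of `A_p`. -/
def localizedModuleQuotientEquivResidueField {A : Type*} [CommRing A] (p : Ideal A) [p.IsPrime] :
    LocalizedModule p.primeCompl (A ⧸ p) ≃ₗ[Localization.AtPrime p]
      Localization.AtPrime p ⧸ maximalIdeal (Localization.AtPrime p) :=
  (IsLocalizedModule.iso p.primeCompl (Submodule.toLocalizedQuotient' (Localization.AtPrime p)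
    p.primeCompl (Algebra.linearMap A (Localization.AtPrime p)) p)).extendScalarsOfIsLocalization
      p.primeCompl (Localization.AtPrime p) |>.trans <|
    Submodule.quotEquivOfEq _ _ <| by
      rw [Ideal.localized'_eq_map, Localization.AtPrime.map_eq_maximalIdeal]

instance isRegularLocalRing_localization {A : Type u} [CommRing A] [IsRegularLocalRing A]
    (p : Ideal A) [p.IsPrime] : IsRegularLocalRing (Localization.AtPrime p) := by
  have := hasProjectiveDimensionLE_of_isRegularLocalRing _ A
    IsRegularLocalRing.spanFinrank_maximalIdeal.symm (A ⧸ p)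
  have hloc := ModuleCat.localizedModule_hasProjectiveDimensionLE
    (maximalIdeal A).spanFinrank p.primeCompl (ModuleCat.of A (A ⧸ p))
  obtain ⟨k, hk⟩ := ENat.ne_top_iff_exists.mp (Ideal.height_ne_top (Ideal.IsPrime.ne_top ‹_›))
  refine isRegularLocalRing_of_hasProjectiveDimensionLE k _ ?_
    ((hasProjectiveDimensionLE_congr ((Shrink.linearEquiv _ _).trans
      (localizedModuleQuotientEquivResidueField p)) _).mp hloc)
  rw [IsLocalization.AtPrime.ringKrullDim_eq_height p, ← hk]
  rfl

end Localization

section Saturation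

variable {A : Type*} [CommRing A]

/-- The saturation `J : m^∞` of `J` with respect to `m`: the elements carried into `J` by some
power of `m`. -/
def saturation (m J : Ideal A) : Ideal A :=
  ⨆ k : ℕ, J.colon (m ^ k : Ideal A)

variable (m : Ideal A) {J K : Ideal A}

lemma monotone_colon_pow (J : Ideal A) : Monotone fun k : ℕ ↦ J.colon (m ^ k : Ideal A) :=
  fun _ _ h ↦ Submodule.colon_mono le_rfl (Ideal.pow_le_pow_right h)

lemma mem_saturation_iff {x : A} : x ∈ saturation m J ↔ ∃ k : ℕ, ∀ y ∈ m ^ k, x * y ∈ J := by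
  simp [saturation, Submodule.mem_iSup_of_directed _ (monotone_colon_pow m J).directed_le,
    Submodule.mem_colon]

lemma le_saturation (J : Ideal A) : J ≤ saturation m J :=
  Ideal.le_colon.trans (le_iSup (fun k : ℕ ↦ J.colon (m ^ k : Ideal A)) 0)

lemma saturation_mono (h : J ≤ K) : saturation m J ≤ saturation m K :=
  iSup_mono fun _ ↦ Submodule.colon_mono h le_rfl

lemma map_saturation_le {B : Type*} [CommRing B] (f : A →+* B) (J : Ideal A) :
    (saturation m J).map f ≤ saturation (m.map f) (J.map f) := by
  refine Ideal.map_le_iff_le_comap.mpr fun x hx ↦ ?_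
  obtain ⟨k, hk⟩ := (mem_saturation_iff m).mp hx
  have hspan : (m ^ k).map f ≤ (J.map f).colon {f x} :=
    Ideal.map_le_iff_le_comap.mpr fun y hy ↦ by
      simpa [mul_comm] using Ideal.mem_map_of_mem f (hk y hy)
  refine (mem_saturation_iff _).mpr ⟨k, fun y hy ↦ ?_⟩
  rw [← Ideal.map_pow] at hy
  simpa [mul_comm] using hspan hy

variable [IsNoetherianRing A]

lemma exists_pow_mul_saturation_le (J : Ideal A) : ∃ k : ℕ, m ^ k * saturation m J ≤ J := by
  let colonChain : ℕ →o Ideal A := ⟨_, monotone_colon_pow m J⟩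
  have hsat := WellFoundedGT.iSup_eq_monotonicSequenceLimit colonChain
  refine ⟨monotonicSequenceLimitIndex colonChain, Ideal.mul_le.mpr fun y hy x hx ↦ ?_⟩
  rw [mul_comm]
  exact Submodule.mem_colon.mp (hsat.le hx) y hy

lemma mem_saturation_of_forall_mul_mem {x : A} (h : ∀ y ∈ m, y * x ∈ saturation m J) :
    x ∈ saturation m J := by
  obtain ⟨k, hk⟩ := exists_pow_mul_saturation_le m J
  refine (mem_saturation_iff m).mpr ⟨k + 1, fun z hz ↦ ?_⟩
  have hx : m * Ideal.span {x} ≤ saturation m J :=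
    Ideal.mul_le.mpr fun y hy z hz ↦ by
      obtain ⟨c, rfl⟩ := Ideal.mem_span_singleton'.mp hz
      rw [mul_left_comm]
      exact Ideal.mul_mem_left _ _ (h y hy)
  rw [mul_comm]
  refine hk (Ideal.mul_mono_right hx ?_)
  rw [← mul_assoc, ← pow_succ]
  exact Ideal.mul_mem_mul hz (Ideal.mem_span_singleton_self x)

lemma exists_saturation_inf_pow_le (J : Ideal A) : ∃ N : ℕ, saturation m J ⊓ m ^ N ≤ J := by
  obtain ⟨k, hk⟩ := exists_pow_mul_saturation_le m J
  obtain ⟨c, hc⟩ := Ideal.exists_pow_inf_eq_pow_smul m (saturation m J)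
  have hArtinRees : m ^ (c + k) ⊓ saturation m J ≤ m ^ k * saturation m J := by
    simpa using (hc (c + k) (Nat.le_add_right c k)).le.trans
      (Submodule.smul_mono le_rfl inf_le_right)
  exact ⟨c + k, inf_comm (saturation m J) _ ▸ hArtinRees.trans hk⟩

lemma iInf_saturation_pow_eq_bot [IsDomain A] {Q : Ideal A} [Q.IsPrime] (hK : K ≤ Q)
    (hm : ¬ m ≤ Q) : ⨅ s : ℕ, saturation m (K ^ s) = ⊥ := by
  refine eq_bot_iff.mpr fun b hb ↦ ?_
  obtain ⟨y, hy, hyQ⟩ := SetLike.not_le_iff_exists.mp hm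
  apply IsLocalization.injective (Localization.AtPrime Q) Q.primeCompl_le_nonZeroDivisors
  rw [map_zero, ← Ideal.mem_bot, ← Ideal.iInf_pow_eq_bot_of_isLocalRing
    (maximalIdeal (Localization.AtPrime Q)) Ideal.IsPrime.ne_top', Submodule.mem_iInf]
  intro s
  obtain ⟨k, hk⟩ := (mem_saturation_iff m).mp ((Submodule.mem_iInf _).mp hb s)
  have hunit : IsUnit (algebraMap A (Localization.AtPrime Q) (y ^ k)) :=
    IsLocalization.map_units (M := Q.primeCompl) _ ⟨y ^ k, fun h ↦
      hyQ (Ideal.IsPrime.mem_of_pow_mem ‹_› k h)⟩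
  rw [← Ideal.mul_unit_mem_iff_mem _ hunit, ← map_mul, ← Localization.AtPrime.map_eq_maximalIdeal,
    ← Ideal.map_pow]
  exact Ideal.mem_map_of_mem _ (Ideal.pow_right_mono hK s (hk _ (Ideal.pow_mem_pow hy k)))

end Saturation

section Chevalley

variable {A : Type*} [CommRing A] [IsLocalRing A] [IsNoetherianRing A]

lemma isArtinianRing_quotient_maximalIdeal_pow {k : ℕ} (hk : k ≠ 0) :
    IsArtinianRing (A ⧸ maximalIdeal A ^ k) := by
  have : Nontrivial (A ⧸ maximalIdeal A ^ k) := Ideal.Quotient.nontrivial_iff.mpr fun h ↦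
    Ideal.IsPrime.ne_top' (top_le_iff.mp (h ▸ Ideal.pow_le_self hk))
  have : IsLocalRing (A ⧸ maximalIdeal A ^ k) :=
    .of_surjective' (Ideal.Quotient.mk _) Ideal.Quotient.mk_surjective
  refine isArtinianRing_iff_isNilpotent_maximalIdeal _ |>.mpr ⟨k, ?_⟩
  rw [← map_maximalIdeal_of_surjective (Ideal.Quotient.mk (maximalIdeal A ^ k))
    Ideal.Quotient.mk_surjective, ← Ideal.map_pow, Ideal.map_quotient_self, Ideal.zero_eq_bot]

lemma exists_le_iInf_sup_maximalIdeal_pow {J : ℕ → Ideal A} (hJ : Antitone J) (k : ℕ) :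
    ∃ S, J S ≤ ⨅ s, J s ⊔ maximalIdeal A ^ k := by
  obtain rfl | hk := eq_or_ne k 0
  · exact ⟨0, by simp⟩
  have := isArtinianRing_quotient_maximalIdeal_pow (A := A) hk
  obtain ⟨S, hS⟩ := IsArtinian.monotone_stabilizes
    ⟨fun s ↦ OrderDual.toDual ((J s).map (Ideal.Quotient.mk (maximalIdeal A ^ k))),
      fun _ _ h ↦ Ideal.map_mono (hJ h)⟩
  refine ⟨S, le_iInf fun s ↦ ?_⟩
  have hmap : (J S).map (Ideal.Quotient.mk (maximalIdeal A ^ k)) =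
      (J (max S s)).map (Ideal.Quotient.mk (maximalIdeal A ^ k)) :=
    hS (max S s) (le_max_left S s)
  have hcomap := Ideal.map_le_iff_le_comap.mp hmap.le
  rw [Ideal.comap_map_quotientMk, sup_comm] at hcomap
  exact hcomap.trans (sup_le_sup_right (hJ (le_max_right S s)) _)

lemma iInf_sup_maximalIdeal_pow (K : Ideal A) : ⨅ k : ℕ, K ⊔ maximalIdeal A ^ k = K := by
  refine le_antisymm (fun b hb ↦ ?_) (le_iInf fun _ ↦ le_sup_left)
  have hKrull := Ideal.iInf_pow_smul_eq_bot_of_isLocalRing (M := A ⧸ K) (maximalIdeal A)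
    Ideal.IsPrime.ne_top'
  rw [← Ideal.Quotient.eq_zero_iff_mem, ← Submodule.mem_bot A, ← hKrull, Submodule.mem_iInf]
  intro k
  obtain ⟨x, hx, y, hy, rfl⟩ := Submodule.mem_sup.mp ((Submodule.mem_iInf _).mp hb k)
  have hxy : Ideal.Quotient.mk K (x + y) = y • (1 : A ⧸ K) := by
    rw [map_add, Ideal.Quotient.eq_zero_iff_mem.mpr hx, zero_add, Algebra.smul_def, mul_one,
      Ideal.Quotient.algebraMap_eq]
  exact hxy ▸ Submodule.smul_mem_smul hy trivial

lemma exists_sub_mem_pow_of_step {R : Type*} [CommRing R] {I : Ideal R} [IsPrecomplete I R]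
    {a : ℕ → R} {N : ℕ} (ha : ∀ i, a (i + 1) - a i ∈ I ^ (N + i)) :
    ∃ b, ∀ i, b - a i ∈ I ^ (N + i) := by
  have hcauchy : ∀ {i j}, i ≤ j → a j - a i ∈ I ^ (N + i) := fun {i j} hij ↦ by
    induction j, hij using Nat.le_induction with
    | base => simp
    | succ j hij ih =>
      rw [← sub_add_sub_cancel _ (a j)]
      exact add_mem (Ideal.pow_le_pow_right (by lia) (ha j)) ih
  obtain ⟨b, hb⟩ := IsPrecomplete.prec (I := I) (M := R) inferInstance (f := a) fun {i j} hij ↦ by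
    rw [SModEq.comm, SModEq.sub_mem, smul_eq_mul, Ideal.mul_top]
    exact Ideal.pow_le_pow_right (by lia) (hcauchy hij)
  refine ⟨b, fun i ↦ ?_⟩
  have hlim := hb (N + i)
  rw [SModEq.comm, SModEq.sub_mem, smul_eq_mul, Ideal.mul_top] at hlim
  rw [← sub_add_sub_cancel _ (a (N + i))]
  exact add_mem hlim (hcauchy (Nat.le_add_left i N))

lemma exists_mem_iInf_sub_mem_maximalIdeal_pow [IsPrecomplete (maximalIdeal A) A]
    {J : ℕ → Ideal A} (hJ : Antitone J) {N : ℕ} {x : A}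
    (hx : x ∈ ⨅ s, J s ⊔ maximalIdeal A ^ N) :
    ∃ b ∈ ⨅ s, J s, b - x ∈ maximalIdeal A ^ N := by
  let W (k : ℕ) : Ideal A := ⨅ s, J s ⊔ maximalIdeal A ^ k
  have hstep (i : ℕ) (y : W (N + i)) :
      ∃ z : W (N + (i + 1)), z.1 - y.1 ∈ maximalIdeal A ^ (N + i) := by
    obtain ⟨S, hS⟩ := exists_le_iInf_sup_maximalIdeal_pow hJ (N + (i + 1))
    obtain ⟨z, hz, w, hw, hzw⟩ := Submodule.mem_sup.mp ((Submodule.mem_iInf _).mp y.2 S)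
    exact ⟨⟨z, hS hz⟩, by simpa [← hzw] using hw⟩
  choose next hnext using hstep
  let a (i : ℕ) : W (N + i) := Nat.rec ⟨x, hx⟩ next i
  obtain ⟨b, hb⟩ := exists_sub_mem_pow_of_step (a := fun i ↦ (a i).1) fun i ↦ hnext i (a i)
  refine ⟨b, (Submodule.mem_iInf _).mpr fun s ↦ ?_, hb 0⟩
  rw [← iInf_sup_maximalIdeal_pow (J s), Submodule.mem_iInf]
  intro k
  have hpow : maximalIdeal A ^ (N + k) ≤ maximalIdeal A ^ k :=
    Ideal.pow_le_pow_right (Nat.le_add_left k N)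
  have hak : (a k).1 ∈ J s ⊔ maximalIdeal A ^ k :=
    sup_le_sup le_rfl hpow ((Submodule.mem_iInf _).mp (a k).2 s)
  rw [← sub_add_cancel b (a k).1]
  exact add_mem (Ideal.mem_sup_right (hpow (hb k))) hak

theorem exists_le_maximalIdeal_pow_of_iInf_eq_bot [IsPrecomplete (maximalIdeal A) A]
    {J : ℕ → Ideal A} (hJ : Antitone J) (hbot : ⨅ s, J s = ⊥) (N : ℕ) :
    ∃ s, J s ≤ maximalIdeal A ^ N := by
  obtain ⟨S, hS⟩ := exists_le_iInf_sup_maximalIdeal_pow hJ N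
  refine ⟨S, fun x hx ↦ ?_⟩
  obtain ⟨b, hb, hbx⟩ := exists_mem_iInf_sub_mem_maximalIdeal_pow hJ (hS hx)
  rw [hbot, Ideal.mem_bot] at hb
  simpa [hb] using hbx

instance isRegularLocalRing_adicCompletion {A : Type*} [CommRing A] [IsRegularLocalRing A] :
    IsRegularLocalRing (AdicCompletion (maximalIdeal A) A) := by
  have : (maximalIdeal (AdicCompletion (maximalIdeal A) A)).LiesOver (maximalIdeal A) :=
    ⟨(maximalIdeal_comap (algebraMap A (AdicCompletion (maximalIdeal A) A))).symm⟩
  apply IsRegularLocalRing.of_spanFinrank_maximalIdeal_le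
  rw [AdicCompletion.spanFinrank_maximalIdeal_eq, (isRegularLocalRing_iff A).mp inferInstance,
    ← maximalIdeal_height_eq_ringKrullDim, ← maximalIdeal_height_eq_ringKrullDim,
    Ideal.height_eq_height_add_of_liesOver_of_hasGoingDown (maximalIdeal A)
      (maximalIdeal (AdicCompletion (maximalIdeal A) A))]
  exact_mod_cast le_self_add

lemma exists_saturation_pow_le_maximalIdeal_pow [IsDomain (AdicCompletion (maximalIdeal A) A)]
    {I q : Ideal A} [q.IsPrime] (hIq : I ≤ q) (hq : q ≠ maximalIdeal A) (N : ℕ) :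
    ∃ s, saturation (maximalIdeal A) (I ^ s) ≤ maximalIdeal A ^ N := by
  let B := AdicCompletion (maximalIdeal A) A
  have : Module.FaithfullyFlat A B := .of_flat_of_isLocalHom
  obtain ⟨⟨Q, _⟩, hQ⟩ := PrimeSpectrum.comap_surjective_of_faithfullyFlat (A := A) (B := B)
    ⟨q, inferInstance⟩
  replace hQ : Q.comap (algebraMap A B) = q := congrArg PrimeSpectrum.asIdeal hQ
  have hIQ : I.map (algebraMap A B) ≤ Q := Ideal.map_le_iff_le_comap.mpr (hQ ▸ hIq)
  have hmQ : ¬ maximalIdeal B ≤ Q := by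
    rw [AdicCompletion.maximalIdeal_eq_map, Ideal.map_le_iff_le_comap, hQ]
    exact fun h ↦ hq (le_antisymm (le_maximalIdeal Ideal.IsPrime.ne_top') h)
  obtain ⟨s, hs⟩ := exists_le_maximalIdeal_pow_of_iInf_eq_bot
    (fun _ _ h ↦ saturation_mono _ (Ideal.pow_le_pow_right h))
    (iInf_saturation_pow_eq_bot _ hIQ hmQ) N
  refine ⟨s, ?_⟩
  rw [AdicCompletion.maximalIdeal_eq_map, ← Ideal.map_pow, ← Ideal.map_pow] at hs
  have hmap := (map_saturation_le (maximalIdeal A) (algebraMap A B) (I ^ s)).trans hs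
  rwa [Ideal.map_le_iff_le_comap, Ideal.comap_map_eq_self_of_faithfullyFlat] at hmap

theorem exists_saturation_pow_le_pow [IsDomain (AdicCompletion (maximalIdeal A) A)]
    {I q : Ideal A} [q.IsPrime] (hIq : I ≤ q) (hq : q ≠ maximalIdeal A) (t : ℕ) :
    ∃ s, t ≤ s ∧ saturation (maximalIdeal A) (I ^ s) ≤ I ^ t := by
  obtain ⟨N, hN⟩ := exists_saturation_inf_pow_le (maximalIdeal A) (I ^ t)
  obtain ⟨s, hs⟩ := exists_saturation_pow_le_maximalIdeal_pow hIq hq N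
  have hanti : Antitone fun s ↦ saturation (maximalIdeal A) (I ^ s) :=
    fun _ _ h ↦ saturation_mono _ (Ideal.pow_le_pow_right h)
  exact ⟨max s t, le_max_right s t,
    (le_inf (hanti (le_max_right s t)) ((hanti (le_max_left s t)).trans hs)).trans hN⟩

end Chevalley

section ExtTorsion

open Abelian

lemma exists_comp_eq_smul_id_of_projective_localizedModule {R : Type*} [CommRing R]
    (S : Submonoid R) {M F M' : Type*} [AddCommGroup M] [Module R M] [Module.FinitePresentation R M]
    [AddCommGroup F] [Module R F] [AddCommGroup M'] [Module R M'] [Module (Localization S) M']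
    [IsScalarTower R (Localization S) M'] (fM : M →ₗ[R] M') [IsLocalizedModule S fM]
    [Module.Projective (Localization S) M'] {f : F →ₗ[R] M} (hf : Function.Surjective f) :
    ∃ s ∈ S, ∃ τ : M →ₗ[R] F, f ∘ₗ τ = s • LinearMap.id := by
  let fF := LocalizedModule.mkLinearMap S F
  let f' := IsLocalizedModule.mapExtendScalars S fF fM (Localization S) f
  obtain ⟨g, hg⟩ := Module.projective_lifting_property f' LinearMap.id
    (IsLocalizedModule.map_surjective S fF fM f hf)
  obtain ⟨τ, s, hτ⟩ := Module.FinitePresentation.exists_lift_of_isLocalizedModule S fF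
    (g.restrictScalars R ∘ₗ fM)
  have hcomp : fM ∘ₗ (f ∘ₗ τ) = fM ∘ₗ (s.1 • LinearMap.id) := by
    ext x
    calc fM (f (τ x)) = f' (fF (τ x)) :=
          (LinearMap.congr_fun (IsLocalizedModule.map_comp S fF fM f) (τ x)).symm
      _ = f' (s.1 • g (fM x)) := congrArg f' (LinearMap.congr_fun hτ x)
      _ = s.1 • f' (g (fM x)) := (f'.restrictScalars R).map_smul s.1 _
      _ = s.1 • fM x := congrArg (s.1 • ·) (LinearMap.congr_fun hg (fM x))
      _ = fM (s.1 • x) := (map_smul fM s.1 x).symm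
  obtain ⟨s', hs'⟩ := Module.Finite.exists_smul_of_comp_eq_of_isLocalizedModule S fM _ _ hcomp
  exact ⟨s' * s, S.mul_mem s'.2 s.2, s'.1 • τ, by rw [LinearMap.comp_smul, mul_smul]; exact hs'⟩

variable {R : Type u} [CommRing R]

lemma mk₀_smul_id_comp {M N : ModuleCat.{u} R} (r : R) {n : ℕ} (e : Ext M N n) :
    (Ext.mk₀ (r • 𝟙 M)).comp e (zero_add n) = r • e := by
  rw [Ext.mk₀_smul, Ext.smul_comp, Ext.mk₀_id_comp]

lemma exists_notMem_smul_eq_zero (p : Ideal R) [p.IsPrime] {E : Type*} [AddCommGroup E]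
    [Module R E] [Module.Finite R E] {s y : R} (hs : s ∉ p) (hy : y ∈ p)
    (h : ∀ e : E, ∃ e' : E, s • e = y • e') : ∃ r ∉ p, ∀ e : E, r • e = 0 := by
  by_contra! hcon
  have hann : Module.annihilator R E ≤ p := fun r hr ↦ by
    by_contra hrp
    obtain ⟨e, he⟩ := hcon r hrp
    exact he (Module.mem_annihilator.mp hr e)
  have hsupp : (⟨p, inferInstance⟩ : PrimeSpectrum R) ∈ Module.support R (QuotSMulTop y E) := by
    rw [Module.support_quotSMulTop]
    exact ⟨Module.mem_support_iff_of_finite.mpr hann, by simpa using hy⟩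
  refine hs (Module.mem_support_iff_of_finite.mp hsupp (Module.mem_annihilator.mpr fun z ↦ ?_))
  obtain ⟨e, rfl⟩ := Submodule.mkQ_surjective _ z
  obtain ⟨e', he'⟩ := h e
  rw [← map_smul, he', Submodule.mkQ_apply, Submodule.Quotient.mk_eq_zero]
  exact Submodule.smul_mem_pointwise_smul e' y ⊤ trivial

variable [IsNoetherianRing R]

lemma exists_smul_ext_eq_zero_of_projective_localizedModule (S : Submonoid R) (M : ModuleCat.{u} R)
    [Module.Finite R M] [Module.Projective (Localization S) (M.localizedModule S)] :
    ∃ s ∈ S, ∀ (N : ModuleCat.{u} R) (k : ℕ) (e : Ext M N (k + 1)), s • e = 0 := by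
  obtain ⟨F, _, _, _, _, f, hf⟩ := Module.exists_finite_presentation R M
  have := Module.finitePresentation_of_finite R M
  have : IsLocalizedModule S (M.localizedModuleMkLinearMap S) :=
    M.localizedModule_isLocalizedModule S
  obtain ⟨s, hs, τ, hτ⟩ := exists_comp_eq_smul_id_of_projective_localizedModule S
    (M.localizedModuleMkLinearMap S) hf
  have hfactor : s • 𝟙 M = ModuleCat.ofHom τ ≫ ModuleCat.ofHom f :=
    ModuleCat.hom_ext hτ.symm
  have : Projective (ModuleCat.of R F) := (IsProjective.iff_projective F).mp inferInstance
  refine ⟨s, hs, fun N k e ↦ ?_⟩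
  rw [← mk₀_smul_id_comp, hfactor, ← Ext.mk₀_comp_mk₀_assoc,
    Ext.eq_zero_of_projective ((Ext.mk₀ (ModuleCat.ofHom f)).comp e _), Ext.comp_zero]

theorem exists_smul_ext_eq_zero_of_hasProjectiveDimensionLE (S : Submonoid R) (n : ℕ)
    (M : ModuleCat.{u} R) [Module.Finite R M]
    (h : HasProjectiveDimensionLE (M.localizedModule S) n) :
    ∃ s ∈ S, ∀ (N : ModuleCat.{u} R) (k : ℕ), n ≤ k → ∀ e : Ext M N (k + 1), s • e = 0 := by
  induction n generalizing M with
  | zero =>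
    have : Module.Projective (Localization S) (M.localizedModule S) := by
      rwa [IsProjective.iff_projective, projective_iff_hasProjectiveDimensionLE_zero]
    obtain ⟨s, hs, hkill⟩ := exists_smul_ext_eq_zero_of_projective_localizedModule S M
    exact ⟨s, hs, fun N k _ e ↦ hkill N k e⟩
  | succ n ih =>
    obtain ⟨F, _, _, _, _, f, hf⟩ := Module.exists_finite_presentation R M
    have hexact := LinearMap.shortExact_shortComplexKer hf
    have : Projective (ModuleCat.of R F) := (IsProjective.iff_projective F).mp inferInstance
    have : Projective (f.shortComplexKer.map (ModuleCat.localizedModuleFunctor S)).X₂ :=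
      (ModuleCat.localizedModuleFunctor.{u} S).projective_obj (ModuleCat.of R F)
    have hexactLoc := hexact.map_of_exact (ModuleCat.localizedModuleFunctor S)
    obtain ⟨s, hs, hkill⟩ := ih (ModuleCat.of R (LinearMap.ker f))
      ((hexactLoc.hasProjectiveDimensionLT_X₃_iff n ‹_›).mp h)
    refine ⟨s, hs, fun N k hnk e ↦ ?_⟩
    obtain ⟨k, rfl⟩ := Nat.exists_eq_add_one_of_ne_zero (by lia : k ≠ 0)
    obtain ⟨e', rfl⟩ := precomp_extClass_surjective_of_projective_X₂ N hexact (k + 1) e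
    change s • (hexact.extClass.comp e' (add_comm 1 (k + 1))) = 0
    rw [← Ext.comp_smul, hkill N k (by lia) e', Ext.comp_zero]

variable (p : Ideal R) [p.IsPrime] [IsRegularLocalRing (Localization.AtPrime p)]

lemma exists_notMem_smul_ext_eq_zero_of_height_le {n : ℕ} (hn : p.height ≤ n)
    (M : ModuleCat.{u} R) [Module.Finite R M] :
    ∃ s ∉ p, ∀ (N : ModuleCat.{u} R) (k : ℕ), n ≤ k → ∀ e : Ext M N (k + 1), s • e = 0 := by
  obtain ⟨h, hh⟩ := ENat.ne_top_iff_exists.mp (Ideal.height_ne_top (I := p) Ideal.IsPrime.ne_top')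
  have hdim : ringKrullDim (Localization.AtPrime p) = (h : ℕ) := by
    rw [IsLocalization.AtPrime.ringKrullDim_eq_height p (Localization.AtPrime p), ← hh]
    rfl
  have : Module.Finite (Localization.AtPrime p) (M.localizedModule p.primeCompl) :=
    .of_isLocalizedModule p.primeCompl (M.localizedModuleMkLinearMap p.primeCompl)
  have := hasProjectiveDimensionLE_of_isRegularLocalRing h (Localization.AtPrime p) hdim
    (M.localizedModule p.primeCompl)
  have hhn : h ≤ n := by exact_mod_cast hh ▸ hn
  exact exists_smul_ext_eq_zero_of_hasProjectiveDimensionLE p.primeCompl n M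
    (hasProjectiveDimensionLT_of_ge _ (h + 1) (n + 1) (by lia))

theorem exists_notMem_smul_ext_eq_zero_of_isSMulRegular {j : ℕ} (hj : p.height ≤ j)
    (M N : ModuleCat.{u} R) [Module.Finite R M] [Module.Finite R N] {y : R} (hy : y ∈ p)
    (hreg : IsSMulRegular M y) : ∃ r ∉ p, ∀ e : Ext M N j, r • e = 0 := by
  have hexact := hreg.smulShortComplex_shortExact
  have : Module.Finite R (M.smulShortComplex y).X₃ :=
    inferInstanceAs (Module.Finite R (QuotSMulTop y M))
  obtain ⟨s, hs, hkill⟩ :=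
    exists_notMem_smul_ext_eq_zero_of_height_le p hj (M.smulShortComplex y).X₃
  refine exists_notMem_smul_eq_zero p hs hy fun e ↦ ?_
  have hcomp :
      hexact.extClass.comp (s • e : Ext (M.smulShortComplex y).X₁ N j) (add_comm 1 j) = 0 :=
    (Ext.comp_smul _ _ _ _).trans (hkill N j le_rfl _)
  obtain ⟨e', he'⟩ := Ext.contravariant_sequence_exact₁ hexact N _ (add_comm 1 j) hcomp
  exact ⟨e', he'.symm.trans (mk₀_smul_id_comp y e')⟩

end ExtTorsion

section ProVanishing

open Abelian

lemma exists_isSMulRegular_of_forall_smul_eq_zero {R M : Type*} [CommRing R] [IsNoetherianRing R]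
    [AddCommGroup M] [Module R M] [Module.Finite R M] (I : Ideal R)
    (h : ∀ x : M, (∀ y ∈ I, y • x = 0) → x = 0) : ∃ y ∈ I, IsSMulRegular M y := by
  have : Subsingleton (R ⧸ I →ₗ[R] M) := subsingleton_of_forall_eq 0 fun φ ↦ by
    refine Submodule.linearMap_qext _ (LinearMap.ext_ring (h _ fun y hy ↦ ?_))
    rw [← map_smul, LinearMap.comp_apply, Submodule.mkQ_apply,
      (Submodule.Quotient.mk_eq_zero I).mpr (by simpa using hy), map_zero]
  simpa only [Ideal.annihilator_quotient] using IsSMulRegular.subsingleton_linearMap_iff.mp this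

lemma exists_mem_forall_mul_mem_of_fg {R : Type*} [CommRing R] (S : Submonoid R) {J K : Ideal R}
    (hJ : J.FG) (h : ∀ x ∈ J, ∃ s ∈ S, s * x ∈ K) : ∃ s ∈ S, ∀ x ∈ J, s * x ∈ K := by
  obtain ⟨T, rfl⟩ := hJ
  choose! s hsS hsK using h
  refine ⟨∏ x ∈ T, s x, S.prod_mem fun x hx ↦ hsS x (Ideal.subset_span hx), ?_⟩
  have hspan : Ideal.span (T : Set R) ≤ K.colon {∏ x ∈ T, s x} := Ideal.span_le.mpr fun x hx ↦ by
    obtain ⟨c, hc⟩ := Finset.dvd_prod_of_mem s hx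
    rw [SetLike.mem_coe, Submodule.mem_colon_singleton, smul_eq_mul, hc, ← mul_assoc, mul_comm x]
    exact Ideal.mul_mem_right c K (hsK x (Ideal.subset_span hx))
  intro x hx
  rw [mul_comm]
  exact Submodule.mem_colon_singleton.mp (hspan hx)

variable {R : Type u} [CommRing R]

lemma exists_isSMulRegular_quotient_comap_saturation [IsNoetherianRing R] (p : Ideal R) [p.IsPrime]
    (K : Ideal (Localization.AtPrime p)) :
    ∃ y ∈ p, IsSMulRegular (R ⧸ (saturation (maximalIdeal (Localization.AtPrime p)) K).comap
      (algebraMap R (Localization.AtPrime p))) y := by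
  refine exists_isSMulRegular_of_forall_smul_eq_zero p fun x hx ↦ ?_
  obtain ⟨x, rfl⟩ := Ideal.Quotient.mk_surjective x
  refine Ideal.Quotient.eq_zero_iff_mem.mpr (mem_saturation_of_forall_mul_mem _ fun y hy ↦ ?_)
  have hp : p.map (algebraMap R (Localization.AtPrime p)) ≤
      (saturation (maximalIdeal (Localization.AtPrime p)) K).colon
        {algebraMap R (Localization.AtPrime p) x} :=
    Ideal.map_le_iff_le_comap.mpr fun z hz ↦ by
      have hzx := hx z hz
      rw [Algebra.smul_def, Ideal.Quotient.algebraMap_eq, ← map_mul,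
        Ideal.Quotient.eq_zero_iff_mem, Ideal.mem_comap, map_mul] at hzx
      exact Submodule.mem_colon_singleton.mpr hzx
  rw [← Localization.AtPrime.map_eq_maximalIdeal] at hy
  exact Submodule.mem_colon_singleton.mp (hp hy)

lemma map_localizationAtPrime_ne_maximalIdeal {p q : Ideal R} [p.IsPrime] [q.IsPrime]
    (hqp : q < p) :
    q.map (algebraMap R (Localization.AtPrime p)) ≠ maximalIdeal (Localization.AtPrime p) := by
  intro h
  have hdisj : Disjoint (p.primeCompl : Set R) q :=
    Set.disjoint_left.mpr fun x hx hxq ↦ hx (hqp.le hxq)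
  have hunder := congrArg (Ideal.under R) h
  rw [IsLocalization.under_map_of_isPrime_disjoint p.primeCompl _ inferInstance hdisj,
    Localization.AtPrime.under_maximalIdeal] at hunder
  exact hqp.ne hunder

lemma exists_pow_le_ideal_isSMulRegular_quotient [IsNoetherianRing R] {p q I : Ideal R} [p.IsPrime]
    [IsRegularLocalRing (Localization.AtPrime p)] [q.IsPrime] (hIq : I ≤ q) (hqp : q < p) (t : ℕ) :
    ∃ t', t ≤ t' ∧ ∃ J : Ideal R, I ^ t' ≤ J ∧ (∃ s ∉ p, ∀ x ∈ J, s * x ∈ I ^ t) ∧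
      ∃ y ∈ p, IsSMulRegular (R ⧸ J) y := by
  let A := Localization.AtPrime p
  have : (q.map (algebraMap R A)).IsPrime :=
    IsLocalization.isPrime_of_isPrime_disjoint p.primeCompl A q inferInstance
      (Set.disjoint_left.mpr fun x hx hxq ↦ hx (hqp.le hxq))
  obtain ⟨t', htt', ht'⟩ := exists_saturation_pow_le_pow (Ideal.map_mono hIq)
    (map_localizationAtPrime_ne_maximalIdeal hqp) t
  refine ⟨t', htt', (saturation (maximalIdeal A) (I.map (algebraMap R A) ^ t')).comap
    (algebraMap R A), ?_, ?_, exists_isSMulRegular_quotient_comap_saturation p _⟩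
  · rw [← Ideal.map_le_iff_le_comap, Ideal.map_pow]
    exact le_saturation _ _
  · refine exists_mem_forall_mul_mem_of_fg p.primeCompl (IsNoetherian.noetherian _) fun x hx ↦ ?_
    have hxI := ht' hx
    rwa [← Ideal.map_pow, IsLocalization.algebraMap_mem_map_algebraMap_iff p.primeCompl] at hxI

/-- The projection `R / I ^ t' → R / I ^ t` for `t ≤ t'`. -/
def quotientPowProj (I : Ideal R) {t t' : ℕ} (h : t ≤ t') :
    ModuleCat.of R (R ⧸ I ^ t') ⟶ ModuleCat.of R (R ⧸ I ^ t) :=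
  ModuleCat.ofHom (Submodule.factor (Ideal.pow_le_pow_right h))

/-- The direct system `Ext^j(R / I ^ t, N)`, `t → ∞`, is essentially zero at `p`: each term is
carried to zero by a later transition map, up to a multiplier outside `p`. This forces
`H^j_I(N)_p = 0`. -/
def IsExtEssentiallyZeroAt (p I : Ideal R) (N : ModuleCat.{u} R) (j : ℕ) : Prop :=
  ∀ t : ℕ, ∃ t', ∃ h : t ≤ t', ∃ r ∉ p, ∀ e : Ext (ModuleCat.of R (R ⧸ I ^ t)) N j,
    (Ext.mk₀ (r • quotientPowProj I h)).comp e (zero_add j) = 0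

lemma isExtEssentiallyZeroAt_of_not_le {p I : Ideal R} [p.IsPrime] (hI : ¬ I ≤ p)
    (N : ModuleCat.{u} R) (j : ℕ) : IsExtEssentiallyZeroAt p I N j := by
  intro t
  obtain ⟨x, hx, hxp⟩ := SetLike.not_le_iff_exists.mp hI
  refine ⟨t, le_rfl, x ^ t, p.primeCompl.pow_mem hxp t, fun e ↦ ?_⟩
  have hzero : x ^ t • quotientPowProj I (le_refl t) = 0 := by
    refine ModuleCat.hom_ext (Submodule.linearMap_qext _ (LinearMap.ext fun z ↦ ?_))
    exact Ideal.Quotient.eq_zero_iff_mem.mpr (Ideal.mul_mem_right z _ (Ideal.pow_mem_pow hx t))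
  rw [hzero, Ext.mk₀_zero, Ext.zero_comp]

variable [IsNoetherianRing R] {p : Ideal R} [p.IsPrime]
  [IsRegularLocalRing (Localization.AtPrime p)]

lemma isExtEssentiallyZeroAt_of_height_le {k : ℕ} (hk : p.height ≤ k) (I : Ideal R)
    (N : ModuleCat.{u} R) : IsExtEssentiallyZeroAt p I N (k + 1) := by
  intro t
  obtain ⟨r, hr, hkill⟩ :=
    exists_notMem_smul_ext_eq_zero_of_height_le p hk (ModuleCat.of R (R ⧸ I ^ t))
  refine ⟨t, le_rfl, r, hr, fun e ↦ ?_⟩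
  rw [Ext.mk₀_smul, Ext.smul_comp, ← Ext.comp_smul, hkill N k le_rfl, Ext.comp_zero]

lemma isExtEssentiallyZeroAt_of_lt {q I : Ideal R} [q.IsPrime] (hIq : I ≤ q) (hqp : q < p)
    {j : ℕ} (hj : p.height ≤ j) (N : ModuleCat.{u} R) [Module.Finite R N] :
    IsExtEssentiallyZeroAt p I N j := by
  intro t
  obtain ⟨t', htt', J, hJ, ⟨s, hs, hsJ⟩, y, hy, hreg⟩ :=
    exists_pow_le_ideal_isSMulRegular_quotient hIq hqp t
  obtain ⟨r, hr, hkill⟩ :=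
    exists_notMem_smul_ext_eq_zero_of_isSMulRegular p hj (ModuleCat.of R (R ⧸ J)) N hy hreg
  refine ⟨t', htt', r * s, p.primeCompl.mul_mem hr hs, fun e ↦ ?_⟩
  let α : ModuleCat.of R (R ⧸ I ^ t') ⟶ ModuleCat.of R (R ⧸ J) :=
    ModuleCat.ofHom (Submodule.factor hJ)
  let β : ModuleCat.of R (R ⧸ J) ⟶ ModuleCat.of R (R ⧸ I ^ t) :=
    ModuleCat.ofHom (Submodule.mapQ J (I ^ t) (LinearMap.lsmul R R s) hsJ)
  have hfactor : s • quotientPowProj I htt' = α ≫ β :=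
    ModuleCat.hom_ext (Submodule.linearMap_qext _ rfl)
  rw [mul_smul, hfactor, Ext.mk₀_smul, Ext.smul_comp, ← Ext.mk₀_comp_mk₀_assoc, ← Ext.comp_smul,
    hkill, Ext.comp_zero]

end ProVanishing

section LocalCohomology

variable {R : Type u} [CommRing R]

lemma smul_hom_apply_eq_zero {M N : ModuleCat.{u} R} (g : M ⟶ N) {r : R} {x : M} (h : r • x = 0) :
    r • g x = 0 := by
  rw [← map_smul, h, map_zero]

lemma smul_shortComplex_homologyMap_eq_zero {S T : ShortComplex (ModuleCat.{u} R)} (θ : S ⟶ T)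
    {r : R} (h : ∀ z : S.X₂, S.g z = 0 → ∃ w : T.X₁, T.f w = r • θ.τ₂ z) (x : S.homology) :
    r • ShortComplex.homologyMap θ x = 0 := by
  obtain ⟨x, rfl⟩ := (ModuleCat.epi_iff_surjective S.homologyπ).mp inferInstance x
  obtain ⟨w, hw⟩ := h (S.iCycles x) (by
    rw [← ConcreteCategory.comp_apply, ShortComplex.iCycles_g]; rfl)
  have hcycle : r • ShortComplex.cyclesMap θ x = T.toCycles w := by
    apply (ModuleCat.mono_iff_injective T.iCycles).mp inferInstance
    rw [← ConcreteCategory.comp_apply T.toCycles, ShortComplex.toCycles_i, hw, map_smul,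
      ← ConcreteCategory.comp_apply (ShortComplex.cyclesMap θ), ShortComplex.cyclesMap_i,
      ConcreteCategory.comp_apply]
  rw [← ConcreteCategory.comp_apply, ShortComplex.homologyπ_naturality,
    ConcreteCategory.comp_apply, ← map_smul, hcycle, ← ConcreteCategory.comp_apply,
    ShortComplex.toCycles_comp_homologyπ]
  rfl

lemma smul_shortComplex_homologyMap_unop_eq_zero {S T : ShortComplex (ModuleCat.{u} R)ᵒᵖ}
    (ψ : S ⟶ T) {r : R}
    (h : ∀ z : T.unop.X₂, T.unop.g z = 0 → ∃ w : S.unop.X₁, S.unop.f w = r • ψ.τ₂.unop z)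
    (x : T.homology.unop) : r • (ShortComplex.homologyMap ψ).unop x = 0 := by
  have hψ : ShortComplex.homologyMap ψ = S.unop.homologyOpIso.hom ≫
      (ShortComplex.homologyMap (ShortComplex.unopMap ψ)).op ≫ T.unop.homologyOpIso.inv := by
    rw [ShortComplex.homologyMap_op]
    simp only [Category.assoc, Iso.hom_inv_id, Iso.hom_inv_id_assoc, Category.comp_id]
    rfl
  rw [hψ]
  exact smul_hom_apply_eq_zero S.unop.homologyOpIso.hom.unop
    (smul_shortComplex_homologyMap_eq_zero (ShortComplex.unopMap ψ) h _)

lemma smul_homologyMap_unop_eq_zero {K L : ChainComplex (ModuleCat.{u} R)ᵒᵖ ℕ} (ψ : K ⟶ L)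
    {r : R} {k : ℕ}
    (h : ∀ z : (L.X (k + 1)).unop, (L.d (k + 2) (k + 1)).unop z = 0 →
      ∃ w : (K.X k).unop, (K.d (k + 1) k).unop w = r • (ψ.f (k + 1)).unop z)
    (x : (L.homology (k + 1)).unop) :
    r • (HomologicalComplex.homologyMap ψ (k + 1)).unop x = 0 := by
  let η := HomologicalComplex.homologyFunctorIso' (ModuleCat.{u} R)ᵒᵖ (ComplexShape.down ℕ)
    (k + 2) (k + 1) k (by simp) (by simp)
  let ψ' := (HomologicalComplex.shortComplexFunctor' (ModuleCat.{u} R)ᵒᵖ (ComplexShape.down ℕ)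
    (k + 2) (k + 1) k).map ψ
  have hψ : HomologicalComplex.homologyMap ψ (k + 1) =
      η.hom.app K ≫ ShortComplex.homologyMap ψ' ≫ η.inv.app L := by
    have hnat := η.hom.naturality_assoc ψ (η.inv.app L)
    rw [Iso.hom_inv_id_app] at hnat
    exact (Category.comp_id _).symm.trans hnat
  rw [hψ]
  exact smul_hom_apply_eq_zero (η.hom.app K).unop
    (smul_shortComplex_homologyMap_unop_eq_zero ψ' h _)

lemma exists_d_comp_eq_smul_of_mk₀_comp_eq_zero {X X' N : ModuleCat.{u} R} {f : X' ⟶ X}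
    {P : ProjectiveResolution X} {P' : ProjectiveResolution X'}
    (φ : ProjectiveResolution.Hom P' P f) {r : R} {k : ℕ}
    (h : ∀ e : Abelian.Ext X N (k + 1), (Abelian.Ext.mk₀ (r • f)).comp e (zero_add _) = 0)
    (z : P.complex.X (k + 1) ⟶ N) (hz : P.complex.d (k + 2) (k + 1) ≫ z = 0) :
    ∃ w : P'.complex.X k ⟶ N, P'.complex.d (k + 1) k ≫ w = r • (φ.hom.f (k + 1) ≫ z) := by
  have hf := h (P.extMk z (k + 2) rfl hz)
  rw [Abelian.Ext.mk₀_smul, Abelian.Ext.smul_comp,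
    ProjectiveResolution.mk₀_comp_extMk z (k + 2) rfl hz φ] at hf
  have hr := P'.extMk_comp_mk₀ (φ.hom.f (k + 1) ≫ z) (k + 2) rfl
    (by simp [← φ.hom.comm_assoc, hz]) (r • 𝟙 N)
  rw [Abelian.Ext.mk₀_smul, Abelian.Ext.comp_smul, Abelian.Ext.comp_mk₀_id, hf] at hr
  obtain ⟨w, hw⟩ := (P'.extMk_eq_zero_iff _ _ _ _ k rfl).mp hr.symm
  exact ⟨w, by rw [hw, Linear.comp_smul, Category.comp_id]⟩

lemma smul_ext_map_eq_zero_of_mk₀_comp_eq_zero {X X' N : ModuleCat.{u} R} (f : X' ⟶ X) {r : R}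
    {k : ℕ}
    (h : ∀ e : Abelian.Ext X N (k + 1), (Abelian.Ext.mk₀ (r • f)).comp e (zero_add _) = 0)
    (x : ((Ext R (ModuleCat.{u} R) (k + 1)).obj (Opposite.op X)).obj N) :
    r • ((Ext R (ModuleCat.{u} R) (k + 1)).map f.op).app N x = 0 := by
  let P := projectiveResolution X
  let P' := projectiveResolution X'
  let φ : P'.complex ⟶ P.complex := ProjectiveResolution.lift f P' P
  have hφ : φ ≫ P.π = P'.π ≫ (ChainComplex.single₀ _).map f :=
    ProjectiveResolution.lift_commutes f P' P
  let Φ : ProjectiveResolution.Hom P' P f := ⟨φ, by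
    rw [← HomologicalComplex.comp_f, hφ, HomologicalComplex.comp_f]⟩
  let F := ((linearYoneda R (ModuleCat.{u} R)).obj N).rightOp
  change r • ((F.leftDerived (k + 1)).map f).unop x = 0
  rw [F.leftDerived_map_eq (k + 1) f φ hφ]
  exact smul_hom_apply_eq_zero (P'.isoLeftDerivedObj F (k + 1)).hom.unop
    (smul_homologyMap_unop_eq_zero ((F.mapHomologicalComplex (ComplexShape.down ℕ)).map φ)
      (exists_d_comp_eq_smul_of_mk₀_comp_eq_zero Φ h) _)

lemma exists_notMem_smul_localCohomology_eq_zero {p I : Ideal R} {k : ℕ} {N : ModuleCat.{u} R}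
    (h : IsExtEssentiallyZeroAt p I N (k + 1)) (x : (localCohomology I (k + 1)).obj N) :
    ∃ r ∉ p, r • x = 0 := by
  let G := localCohomology.diagram (localCohomology.idealPowersDiagram I) (k + 1)
  have : Limits.HasColimit G := localCohomology.hasColimitDiagram.{u, 0} _ _
  have : Limits.PreservesFilteredColimitsOfSize.{0, 0} (forget (ModuleCat.{u} R)) :=
    Limits.preservesFilteredColimitsOfSize_of_univLE.{u, u, 0, 0} _
  obtain ⟨⟨⟨t⟩⟩, y, hy⟩ := Limits.Concrete.isColimit_exists_rep _
    (Limits.isColimitOfPreserves ((evaluation _ _).obj N) (Limits.colimit.isColimit G)) x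
  obtain ⟨t', ht, r, hr, hkill⟩ := h t
  let transition : Opposite.op (Opposite.op t) ⟶ Opposite.op (Opposite.op t') := (homOfLE ht).op.op
  have hcompat : (G.map transition).app N ≫ (Limits.colimit.ι G (.op (.op t'))).app N =
      (Limits.colimit.ι G (.op (.op t))).app N := by
    rw [← NatTrans.comp_app, Limits.colimit.w]
  have hx : (Limits.colimit.ι G (.op (.op t'))).app N ((G.map transition).app N y) = x :=
    Eq.trans (congrArg (fun f ↦ (ConcreteCategory.hom f) y) hcompat) hy
  refine ⟨r, hr, ?_⟩
  rw [← hx]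
  exact smul_hom_apply_eq_zero _
    (smul_ext_map_eq_zero_of_mk₀_comp_eq_zero (quotientPowProj I ht) hkill y)

lemma notMem_support_localCohomology {p : PrimeSpectrum R} {I : Ideal R} {k : ℕ}
    {N : ModuleCat.{u} R} (h : IsExtEssentiallyZeroAt p.asIdeal I N (k + 1)) :
    p ∉ Module.support R ((localCohomology I (k + 1)).obj N) :=
  Module.notMem_support_iff'.mpr (exists_notMem_smul_localCohomology_eq_zero h)

end LocalCohomology

section Support

instance isRegularRing_of_isRegularLocalRing {R : Type u} [CommRing R] [IsRegularLocalRing R] :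
    IsRegularRing R where
  isRegularLocalRing_localization := isRegularLocalRing_localization

lemma isRegularLocalRing_of_span_eq_of_card_eq {R : Type*} [CommRing R] [IsLocalRing R]
    [IsNoetherianRing R] {s : Finset R} (hs : Ideal.span (s : Set R) = maximalIdeal R)
    (hcard : ringKrullDim R = s.card) : IsRegularLocalRing R := by
  refine .of_spanFinrank_maximalIdeal_le _ ?_
  rw [hcard, ← hs, ← Set.ncard_coe_finset]
  exact_mod_cast Submodule.spanFinrank_span_le_ncard_of_finite s.finite_toSet

lemma exists_height_eq_ringKrullDim_quotient_eq {R : Type*} [CommRing R] {n : ℕ}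
    (hdim : ringKrullDim R = n) (p : PrimeSpectrum R) :
    ∃ a b : ℕ, Order.height p = a ∧ ringKrullDim (R ⧸ p.asIdeal) = b ∧ a + b ≤ n := by
  have hcoheight : ringKrullDim (R ⧸ p.asIdeal) = Order.coheight p := by
    rw [ringKrullDim_quotient, Order.coheight_eq_krullDim_Ici]
    congr 1
  have : Nonempty (PrimeSpectrum R) := ⟨p⟩
  have hle : Order.height p + Order.coheight p ≤ n := by
    rw [← WithBot.coe_le_coe]
    refine le_trans ?_ hdim.le
    rw [ringKrullDim, Order.krullDim_eq_iSup_height_add_coheight_of_nonempty]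
    exact WithBot.coe_le_coe.mpr
      (le_iSup (fun q : PrimeSpectrum R ↦ Order.height q + Order.coheight q) p)
  have hsum : Order.height p + Order.coheight p ≠ ⊤ :=
    ne_top_of_le_ne_top (ENat.natCast_ne_top n) hle
  obtain ⟨hheight_top, hcoheight_top⟩ := not_or.mp (mt WithTop.add_eq_top.mpr hsum)
  obtain ⟨a, ha⟩ := ENat.ne_top_iff_exists.mp hheight_top
  obtain ⟨b, hb⟩ := ENat.ne_top_iff_exists.mp hcoheight_top
  refine ⟨a, b, ha.symm, by rw [hcoheight, ← hb]; rfl, ?_⟩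
  rw [← ha, ← hb] at hle
  exact_mod_cast hle

variable {R : Type u} [CommRing R] [IsNoetherianRing R] {p : PrimeSpectrum R}
  [IsRegularLocalRing (Localization.AtPrime p.asIdeal)] {I : Ideal R} {N : ModuleCat.{u} R}

theorem le_height_of_mem_support_localCohomology {j : ℕ}
    (hp : p ∈ Module.support R ((localCohomology I j).obj N)) : j ≤ p.asIdeal.height := by
  by_contra! hlt
  cases j with
  | zero => simp at hlt
  | succ k =>
    have hk : p.asIdeal.height ≤ k := ENat.lt_natCast_add_one_iff.mp (by exact_mod_cast hlt)
    exact notMem_support_localCohomology (isExtEssentiallyZeroAt_of_height_le hk I N) hp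

theorem lt_height_of_mem_support_localCohomology_of_notMem_minimalPrimes [Module.Finite R N]
    {k : ℕ} (hp : p ∈ Module.support R ((localCohomology I (k + 1)).obj N))
    (hmin : p.asIdeal ∉ I.minimalPrimes) : (k + 1 : ℕ) < p.asIdeal.height := by
  by_contra! hle
  refine notMem_support_localCohomology ?_ hp
  by_cases hI : I ≤ p.asIdeal
  · obtain ⟨q, hq, hqp⟩ := Ideal.exists_minimalPrimes_le hI
    have := hq.1.1
    have hne : q ≠ p.asIdeal := fun h ↦ hmin (h ▸ hq)
    exact isExtEssentiallyZeroAt_of_lt hq.1.2 (lt_of_le_of_ne hqp hne) hle N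
  · exact isExtEssentiallyZeroAt_of_not_le hI N (k + 1)

end Support

theorem support_localCohomology_height_ge_general {R : Type u} [CommRing R] [IsRegularRing R]
    {n : ℕ} (hdim : ringKrullDim R = n) {I : Ideal R} (N : ModuleCat.{u} R) [Module.Finite R N]
    {i : ℕ} (hin : i < n) (hI : ∀ q ∈ I.minimalPrimes, i < ringKrullDim (R ⧸ q)) :
    ∀ p ∈ Module.support R ((localCohomology I (n - i)).obj N),
      ((n - i + 1 : ℕ) : ℕ∞) ≤ Order.height p ∧ ringKrullDim (R ⧸ p.asIdeal) < i := by
  intro p hp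
  obtain ⟨a, b, ha, hb, hab⟩ := exists_height_eq_ringKrullDim_quotient_eq hdim p
  have hnotMin : p.asIdeal ∉ I.minimalPrimes := fun hmin ↦ by
    have hib := hI _ hmin
    have hle := le_height_of_mem_support_localCohomology hp
    rw [hb] at hib
    rw [PrimeSpectrum.height_eq_orderHeight, ha] at hle
    norm_cast at hib hle
    lia
  obtain ⟨k, hk⟩ := Nat.exists_eq_add_one_of_ne_zero (Nat.sub_ne_zero_of_lt hin)
  have hlt := lt_height_of_mem_support_localCohomology_of_notMem_minimalPrimes (hk ▸ hp) hnotMin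
  rw [PrimeSpectrum.height_eq_orderHeight, ha] at hlt
  rw [ha, hb]
  norm_cast at hlt ⊢
  lia

/-- Let `(R, m)` be a regular local ring of dimension `n` and `I` an ideal such
that `R/I` is equidimensional of dimension `d ≥ 2`.  Fix `1 ≤ i ≤ d - 1`.  Then
every prime `p` in the support of the local cohomology module `H^{n-i}_I(R)`
satisfies `ht p ≥ n - i + 1`; equivalently, `dim Supp H^{n-i}_I(R) ≤ i - 1`. -/
theorem support_localCohomology_height_ge
    (R : Type u) [CommRing R] [IsLocalRing R] [IsNoetherianRing R]
    (n : ℕ) (hdim : ringKrullDim R = (n : ℕ))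
    (hreg : ∃ s : Finset R, Ideal.span (s : Set R) = maximalIdeal R ∧ s.card = n)
    (I : Ideal R) (d : ℕ) (hd : 2 ≤ d)
    (hdimI : ringKrullDim (R ⧸ I) = (d : ℕ))
    (hequi : ∀ p ∈ I.minimalPrimes, ringKrullDim (R ⧸ p) = (d : ℕ))
    (i : ℕ) (hi1 : 1 ≤ i) (hid : i ≤ d - 1) :
    ∀ p ∈ Module.support R ((localCohomology I (n - i)).obj (ModuleCat.of R R)),
      ((n - i + 1 : ℕ) : ℕ∞) ≤ Order.height p ∧
        ringKrullDim (R ⧸ p.asIdeal) ≤ ((i - 1 : ℕ) : ℕ) := by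
  obtain ⟨s, hs, hcard⟩ := hreg
  have := isRegularLocalRing_of_span_eq_of_card_eq hs (by rw [hdim, hcard])
  have hdn : d ≤ n := by exact_mod_cast hdimI ▸ hdim ▸ ringKrullDim_quotient_le I
  intro p hp
  obtain ⟨hheight, hlt⟩ := support_localCohomology_height_ge_general hdim _ (by lia)
    (fun q hq ↦ by rw [hequi q hq]; exact_mod_cast (by lia : i < d)) p hp
  obtain ⟨_, b, _, hb, _⟩ := exists_height_eq_ringKrullDim_quotient_eq hdim p
  rw [hb] at hlt ⊢
  norm_cast at hlt ⊢
  exact ⟨hheight, by lia⟩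
end
end

section
/- Let (R, m) be a regular local ring of dimension n, I an ideal with R/I equidimensional of dimension d ≥ 2, and 1 ≤ i ≤ d−1. Suppose r ∈ m is such that if Supp_R H^{n−i}_I(R) ≠ {m}, then r lies in no minimal member of Supp_R H^{n−i}_I(R). Then dim Supp_R H^0_{(r)}(H^{n−i}_I(R)) ≤ max{0, i−2}. -/
open IsLocalRing CategoryTheory

noncomputable section

universe u

/-!
Let `q` be a prime strictly containing a prime `p ⊇ I`. The completion of `R_q` is again a domain,
and `I` does not become primary to its maximal ideal; so by Krull and Chevalley the saturations of
the powers of `I R_q` are cofinal with the powers themselves. A saturated ideal `J` has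
`depth R_q / J > 0`, hence `pd R_q / J < dim R_q` by Auslander-Buchsbaum, and therefore
`H_I^{dim R_q}` vanishes at `q`. Consequently every prime in the support of `H_I^{n-i}` has
coheight less than `i`. A prime in the support of the `r`-power torsion contains `r`, so it strictly
contains a minimal prime of the support of `H_I^{n-i}` and its coheight drops once more.
-/

namespace LocalCohomologySupport

section RegularLocalRing

variable {S : Type*} [CommRing S]

/-- A regular system of parameters of a Noetherian local ring: a generating set of the maximal
ideal whose cardinality is the Krull dimension. -/
def IsRegularSystemOfParameters [IsLocalRing S] (s : Finset S) : Prop :=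
  Ideal.span (s : Set S) = maximalIdeal S ∧ (s.card : WithBot ℕ∞) = ringKrullDim S

lemma isRegularSystemOfParameters_of_card_le [IsLocalRing S] [IsNoetherianRing S] {s : Finset S}
    (span_eq : Ideal.span (s : Set S) = maximalIdeal S)
    (card_le : (s.card : WithBot ℕ∞) ≤ ringKrullDim S) : IsRegularSystemOfParameters s := by
  refine ⟨span_eq, card_le.antisymm ?_⟩
  have spanFinrank_le : (maximalIdeal S).spanFinrank ≤ s.card := by
    rw [← span_eq, ← Set.ncard_coe_finset]
    exact Submodule.spanFinrank_span_le_ncard_of_finite s.finite_toSet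
  exact (ringKrullDim_le_spanFinrank_maximalIdeal S).trans (by exact_mod_cast spanFinrank_le)

lemma exists_isRegularSystemOfParameters (S : Type*) [CommRing S] [IsRegularLocalRing S] :
    ∃ s : Finset S, IsRegularSystemOfParameters s := by
  obtain ⟨s, card_eq, span_eq⟩ := Submodule.FG.exists_span_finset_card_eq_spanFinrank
    (IsNoetherian.noetherian (maximalIdeal S))
  exact ⟨s, span_eq, by rw [card_eq, IsRegularLocalRing.spanFinrank_maximalIdeal]⟩

lemma IsRegularSystemOfParameters.isRegularLocalRing [IsLocalRing S] [IsNoetherianRing S]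
    {s : Finset S} (hs : IsRegularSystemOfParameters s) : IsRegularLocalRing S := by
  refine .of_spanFinrank_maximalIdeal_le _ (le_trans ?_ hs.2.le)
  rw [← hs.1, ← Set.ncard_coe_finset]
  exact_mod_cast Submodule.spanFinrank_span_le_ncard_of_finite s.finite_toSet

lemma exists_nat_ringKrullDim_eq (S : Type*) [CommRing S] [IsLocalRing S] [IsNoetherianRing S] :
    ∃ N : ℕ, ringKrullDim S = N := by
  obtain ⟨d, hd⟩ := ENat.ne_top_iff_exists.1
    (Ideal.height_ne_top (I := maximalIdeal S) Ideal.IsPrime.ne_top')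
  exact ⟨d, by rw [← maximalIdeal_height_eq_ringKrullDim, ← hd]; rfl⟩

lemma isLocalRing_quotient [IsLocalRing S] {J : Ideal S} (hJ : J ≤ maximalIdeal S) :
    IsLocalRing (S ⧸ J) :=
  have := Ideal.Quotient.nontrivial_iff.2 (ne_top_of_le_ne_top Ideal.IsPrime.ne_top' hJ)
  .of_surjective' _ Ideal.Quotient.mk_surjective

lemma maximalIdeal_quotient [IsLocalRing S] (J : Ideal S) [IsLocalRing (S ⧸ J)] :
    maximalIdeal (S ⧸ J) = (maximalIdeal S).map (Ideal.Quotient.mk J) := by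
  rw [← eq_maximalIdeal (Ideal.comap_isMaximal_of_surjective (Ideal.Quotient.mk J)
    Ideal.Quotient.mk_surjective (K := maximalIdeal (S ⧸ J))),
    Ideal.map_comap_of_surjective _ Ideal.Quotient.mk_surjective]

lemma IsRegularSystemOfParameters.quotient [DecidableEq S] [IsLocalRing S] [IsNoetherianRing S]
    {s t : Finset S} (hs : IsRegularSystemOfParameters s) (hts : t ⊆ s)
    [DecidableEq (S ⧸ Ideal.span (t : Set S))] [IsLocalRing (S ⧸ Ideal.span (t : Set S))] :
    IsRegularSystemOfParameters ((s \ t).image (Ideal.Quotient.mk (Ideal.span (t : Set S)))) := by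
  refine isRegularSystemOfParameters_of_card_le ?_ ?_
  · conv_rhs => rw [maximalIdeal_quotient, ← hs.1, ← Finset.sdiff_union_of_subset hts,
      Finset.coe_union, Ideal.span_union, Ideal.map_sup, Ideal.map_quotient_self, sup_bot_eq]
    rw [Finset.coe_image, Ideal.map_span]
  · obtain ⟨d, hd⟩ := exists_nat_ringKrullDim_eq (S ⧸ Ideal.span (t : Set S))
    have dim_le := ringKrullDim_le_ringKrullDim_quotient_add_card t (by
      rw [ringJacobson_eq_maximalIdeal, ← hs.1]
      exact (Finset.coe_subset.mpr hts).trans Ideal.subset_span)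
    rw [hd, ← hs.2] at dim_le
    have card_le : s.card ≤ d + t.card := by exact_mod_cast dim_le
    have card_sdiff := Finset.card_sdiff_add_card_eq_card hts
    rw [hd]
    exact_mod_cast Finset.card_image_le.trans (by lia)

lemma IsRegularSystemOfParameters.exists_mem_of_notMem_sq [IsLocalRing S] [IsNoetherianRing S]
    {s : Finset S} (hs : IsRegularSystemOfParameters s) {x : S} (hx : x ∈ maximalIdeal S)
    (hx2 : x ∉ maximalIdeal S ^ 2) :
    ∃ t : Finset S, x ∈ t ∧ IsRegularSystemOfParameters t := by
  classical
  obtain ⟨a, ha⟩ := Submodule.mem_span_finset'.1 (hs.1 ▸ hx : x ∈ Ideal.span (s : Set S))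
  have subset_max (y : s) : (y : S) ∈ maximalIdeal S := hs.1 ▸ Ideal.subset_span y.2
  obtain ⟨y, hy⟩ : ∃ y : s, IsUnit (a y) := by
    by_contra! not_unit
    refine hx2 (ha ▸ Ideal.sum_mem _ fun y _ => ?_)
    rw [pow_two]
    exact Ideal.mul_mem_mul ((mem_maximalIdeal _).2 (not_unit y)) (subset_max y)
  refine ⟨insert x (s.erase y), by simp, isRegularSystemOfParameters_of_card_le ?_ ?_⟩
  · refine le_antisymm (Ideal.span_le.2 fun z hz => ?_) (hs.1 ▸ Ideal.span_le.2 fun z hz => ?_)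
    · obtain rfl | hz := Finset.mem_insert.1 hz
      exacts [hx, subset_max ⟨z, Finset.mem_of_mem_erase hz⟩]
    · by_cases hzy : z = y
      · have y_mul_mem : a y * y ∈ Ideal.span (insert x (s.erase (y : S)) : Finset S) := by
          rw [← Finset.add_sum_erase _ _ (Finset.mem_univ y)] at ha
          rw [← smul_eq_mul, eq_sub_of_add_eq ha]
          refine sub_mem (Ideal.subset_span (by simp)) (Ideal.sum_mem _ fun z hz => ?_)
          have ne : (z : S) ≠ y := fun h => (Finset.mem_erase.1 hz).1 (Subtype.ext h)
          exact Ideal.mul_mem_left _ _ (Ideal.subset_span (by simp [ne]))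
        rw [hzy]
        exact (Ideal.unit_mul_mem_iff_mem _ hy).1 y_mul_mem
      · exact Ideal.subset_span (by simp [hzy, Finset.mem_coe.1 hz])
  · rw [← hs.2, ← Finset.card_erase_add_one y.2]
    exact_mod_cast Finset.card_insert_le _ _

lemma isRegularLocalRing_quotient_span_singleton [IsRegularLocalRing S] {x : S}
    (hx : x ∈ maximalIdeal S) (hx2 : x ∉ maximalIdeal S ^ 2) :
    IsRegularLocalRing (S ⧸ Ideal.span {x}) ∧
      ringKrullDim (S ⧸ Ideal.span {x}) + 1 ≤ ringKrullDim S := by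
  classical
  obtain ⟨s, hs⟩ := exists_isRegularSystemOfParameters S
  obtain ⟨t, hxt, ht⟩ := hs.exists_mem_of_notMem_sq hx hx2
  have := isLocalRing_quotient ((Ideal.span_singleton_le_iff_mem _).2 hx)
  rw [← Finset.coe_singleton] at this ⊢
  have hquot := ht.quotient (Finset.singleton_subset_iff.2 hxt)
  refine ⟨hquot.isRegularLocalRing, ?_⟩
  rw [← hquot.2, ← ht.2, ← Finset.card_sdiff_add_card_eq_card (Finset.singleton_subset_iff.2 hxt)]
  exact_mod_cast Nat.add_le_add_right Finset.card_image_le 1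

lemma exists_mem_maximalIdeal_notMem_sq_avoiding [IsLocalRing S] [IsNoetherianRing S]
    (hm : maximalIdeal S ≠ ⊥) {A : Set (Ideal S)} (hA : A.Finite)
    (isPrime : ∀ p ∈ A, p.IsPrime) (ne_max : maximalIdeal S ∉ A) :
    ∃ x ∈ maximalIdeal S, x ∉ maximalIdeal S ^ 2 ∧ ∀ p ∈ A, x ∉ p := by
  by_contra! covered
  obtain ⟨p, hp, max_le⟩ := (Ideal.subset_union_prime_finite (hA.insert (maximalIdeal S ^ 2))
    (f := id) (maximalIdeal S ^ 2) (maximalIdeal S ^ 2)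
    (fun p hp hne _ => isPrime p (hp.resolve_left hne))).1 fun x hx => by
      by_cases hx2 : x ∈ maximalIdeal S ^ 2
      · exact Set.mem_biUnion (Set.mem_insert _ _) hx2
      · obtain ⟨p, hp, hxp⟩ := covered x hx hx2
        exact Set.mem_biUnion (Set.mem_insert_of_mem _ hp) hxp
  obtain rfl | hp := hp
  · refine hm (Submodule.eq_bot_of_le_smul_of_le_jacobson_bot (maximalIdeal S) _
      (IsNoetherian.noetherian _) ?_ (maximalIdeal_le_jacobson _))
    rwa [smul_eq_mul, ← pow_two]
  · exact ne_max ((maximalIdeal.isMaximal S).eq_of_le (isPrime p hp).ne_top max_le ▸ hp)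

lemma eq_bot_of_isPrime_le_span_singleton_of_notMem [IsLocalRing S] [IsNoetherianRing S]
    {p : Ideal S} [hp : p.IsPrime] {x : S} (hx : x ∈ maximalIdeal S) (hle : p ≤ Ideal.span {x})
    (hxp : x ∉ p) : p = ⊥ := by
  refine Submodule.eq_bot_of_le_smul_of_le_jacobson_bot (Ideal.span {x}) _
    (IsNoetherian.noetherian _) (fun f hf => ?_)
    (((Ideal.span_singleton_le_iff_mem _).2 hx).trans (maximalIdeal_le_jacobson _))
  obtain ⟨g, rfl⟩ := Ideal.mem_span_singleton.1 (hle hf)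
  exact Ideal.mul_mem_mul (Ideal.mem_span_singleton_self x)
    ((hp.mem_or_mem hf).resolve_left hxp)

instance isDomain_of_isRegularLocalRing [IsRegularLocalRing S] : IsDomain S := by
  obtain ⟨N, hN⟩ := exists_nat_ringKrullDim_eq S
  induction N using Nat.strong_induction_on generalizing S with
  | _ N ih =>
    by_cases hm : maximalIdeal S = ⊥
    · exact (isField_iff_maximalIdeal_eq.2 hm).isDomain
    have max_notMem : maximalIdeal S ∉ minimalPrimes S := fun h => hm <| by
      have dim_zero := maximalIdeal_height_eq_ringKrullDim (R := S)
      rw [Ideal.height_eq_zero_iff.2 h, ← IsRegularLocalRing.spanFinrank_maximalIdeal] at dim_zero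
      exact (Submodule.spanFinrank_eq_zero_iff_eq_bot (IsNoetherian.noetherian _)).1
        (by exact_mod_cast dim_zero.symm)
    obtain ⟨x, hx, hx2, avoids⟩ := exists_mem_maximalIdeal_notMem_sq_avoiding hm
      (minimalPrimes.finite_of_isNoetherianRing S) (fun p hp => hp.1.1) max_notMem
    obtain ⟨regular_quotient, dim_quotient⟩ := isRegularLocalRing_quotient_span_singleton hx hx2
    obtain ⟨d, hd⟩ := exists_nat_ringKrullDim_eq (S ⧸ Ideal.span {x})
    rw [hd, hN] at dim_quotient
    have domain_quotient := ih d (by exact_mod_cast dim_quotient) hd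
    have span_isPrime := (Ideal.Quotient.isDomain_iff_prime _).1 domain_quotient
    obtain ⟨p, hp, hle⟩ := Ideal.exists_minimalPrimes_le (bot_le (a := Ideal.span {x}))
    have := hp.1.1
    obtain rfl := eq_bot_of_isPrime_le_span_singleton_of_notMem hx hle (avoids p hp)
    exact .of_bot_isPrime S

end RegularLocalRing

section Completion

variable {S : Type*} [CommRing S]

lemma exists_ringHom_adicCompletion_of_map_le {P : Type*} [CommRing P] (g : P →+* S)
    {J : Ideal P} {K : Ideal S} (map_le : J.map g ≤ K) :
    ∃ f : AdicCompletion J P →+* AdicCompletion K S,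
      f.comp (algebraMap P _) = (algebraMap S _).comp g := by
  have pow_le (n : ℕ) : J ^ n ≤ (K ^ n).comap g := by
    rw [← Ideal.map_le_iff_le_comap, Ideal.map_pow]
    exact Ideal.pow_right_mono map_le n
  refine ⟨AdicCompletion.liftRingHom K (fun n => (Ideal.quotientMap (K ^ n) g (pow_le n)).comp
    (AdicCompletion.evalₐ J n : AdicCompletion J P →+* P ⧸ J ^ n)) fun {m n} hle => ?_, ?_⟩
  · ext x
    obtain ⟨y, rfl⟩ := AdicCompletion.mk_surjective J P x
    simp only [RingHom.comp_apply, RingHom.coe_coe, AdicCompletion.evalₐ_mk,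
      Ideal.quotientMap_mk, ← AdicCompletion.Ideal.mk_eq_mk J hle]
    rfl
  · ext1 x
    refine AdicCompletion.ext_evalₐ fun n => ?_
    simp [AdicCompletion.algebraMap_apply]

instance isNoetherianRing_adicCompletion [IsNoetherianRing S] (K : Ideal S) :
    IsNoetherianRing (AdicCompletion K S) := by
  obtain ⟨s, hs⟩ := K.fg_of_isNoetherianRing
  let g : MvPolynomial s S →+* S := (MvPolynomial.aeval ((↑) : s → S)).toRingHom
  have map_vars : (MvPolynomial.idealOfVars s S).map g = K := by
    rw [MvPolynomial.idealOfVars, Ideal.map_span, ← hs, ← Set.range_comp]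
    congr 1
    ext
    simp [g]
  obtain ⟨f, hf⟩ := exists_ringHom_adicCompletion_of_map_le g map_vars.le
  have : IsNoetherianRing (AdicCompletion (MvPolynomial.idealOfVars s S) (MvPolynomial s S)) :=
    isNoetherianRing_of_ringEquiv _ (MvPowerSeries.toAdicCompletionAlgEquiv s S).toRingEquiv
  have := AdicCompletion.isAdicComplete_self _ (MvPolynomial.idealOfVars_fg s S)
  have := AdicCompletion.isAdicComplete_self K K.fg_of_isNoetherianRing
  have map_map : ((MvPolynomial.idealOfVars s S).map (algebraMap _ (AdicCompletion _ _))).map f =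
      K.map (algebraMap S (AdicCompletion K S)) := by
    rw [Ideal.map_map, hf, ← Ideal.map_map, map_vars]
  rw [← map_map] at this
  refine isNoetherianRing_of_surjective _ _ f (surjective_of_mk_map_comp_surjective
    (I := (MvPolynomial.idealOfVars s S).map (algebraMap _ (AdicCompletion _ _))) f fun y => ?_)
  obtain ⟨y, rfl⟩ := Ideal.Quotient.mk_surjective y
  obtain ⟨z, hz⟩ := Ideal.Quotient.mk_surjective (AdicCompletion.evalOneₐ K y)
  refine ⟨algebraMap (MvPolynomial s S) _ (MvPolynomial.C z), ?_⟩
  rw [RingHom.comp_apply, ← RingHom.comp_apply f, hf, RingHom.comp_apply, map_map,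
    Ideal.Quotient.eq, ← AdicCompletion.ker_evalOneₐ_eq_map K K.fg_of_isNoetherianRing]
  simpa [g, RingHom.mem_ker, sub_eq_zero] using hz

lemma isRegularLocalRing_adicCompletion [IsRegularLocalRing S] :
    IsRegularLocalRing (AdicCompletion (maximalIdeal S) S) := by
  refine .of_spanFinrank_maximalIdeal_le _ ?_
  rw [AdicCompletion.spanFinrank_maximalIdeal_eq, IsRegularLocalRing.spanFinrank_maximalIdeal,
    ← maximalIdeal_height_eq_ringKrullDim, ← maximalIdeal_height_eq_ringKrullDim,
    Ideal.height_eq_height_add_of_liesOver_of_hasGoingDown (maximalIdeal S)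
      (maximalIdeal (AdicCompletion (maximalIdeal S) S))]
  exact_mod_cast le_self_add

lemma exists_seq_of_le_sup {K Q : ℕ → Ideal S} (hK : ∀ k, K k ≤ K (k + 1) ⊔ Q k) {x : S}
    (hx : x ∈ K 0) :
    ∃ a : ℕ → S, a 0 = x ∧ (∀ k, a k ∈ K k) ∧ ∀ k, a (k + 1) - a k ∈ Q k := by
  have exists_next (k : ℕ) (y : K k) : ∃ z : K (k + 1), (z : S) - y ∈ Q k := by
    obtain ⟨z, hz, w, hw, add_eq⟩ := Submodule.mem_sup.1 (hK k y.2)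
    refine ⟨⟨z, hz⟩, ?_⟩
    rw [← add_eq, sub_add_cancel_left]
    exact (Q k).neg_mem hw
  choose next next_spec using exists_next
  let a : (k : ℕ) → K k := Nat.rec ⟨x, hx⟩ next
  exact ⟨fun k => (a k).1, rfl, fun k => (a k).2, fun k => next_spec k (a k)⟩

lemma isArtinianRing_quotient_maximalIdeal_pow [IsLocalRing S] [IsNoetherianRing S] (j : ℕ) :
    IsArtinianRing (S ⧸ maximalIdeal S ^ j) := by
  rcases eq_or_ne j 0 with rfl | hj
  · have : Subsingleton (S ⧸ maximalIdeal S ^ 0) := by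
      rw [pow_zero, Ideal.one_eq_top]
      infer_instance
    infer_instance
  · refine quotient_artinian_of_mem_minimalPrimes_of_isLocalRing _ ?_
    rw [← Ideal.radical_minimalPrimes, Ideal.radical_pow _ hj, Ideal.IsPrime.radical inferInstance,
      Ideal.minimalPrimes_eq_subsingleton_self, Set.mem_singleton_iff]

lemma exists_forall_sup_pow_eq [IsLocalRing S] [IsNoetherianRing S] {J : ℕ → Ideal S}
    (hJ : Antitone J) (j : ℕ) :
    ∃ L, ∀ l, L ≤ l → J l ⊔ maximalIdeal S ^ j = J L ⊔ maximalIdeal S ^ j := by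
  have := isArtinianRing_quotient_maximalIdeal_pow (S := S) j
  obtain ⟨L, hL⟩ := IsArtinian.monotone_stabilizes
    (⟨fun l => (J l).map (Ideal.Quotient.mk _), fun a b h => Ideal.map_mono (hJ h)⟩ :
      ℕ →o (Ideal (S ⧸ maximalIdeal S ^ j))ᵒᵈ)
  refine ⟨L, fun l hl => ?_⟩
  have map_eq : (J L).map (Ideal.Quotient.mk (maximalIdeal S ^ j)) = (J l).map _ := hL l hl
  have comap_eq := congr_arg (Ideal.comap (Ideal.Quotient.mk (maximalIdeal S ^ j))) map_eq.symm
  simpa [Ideal.comap_map_of_surjective' _ Ideal.Quotient.mk_surjective] using comap_eq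

lemma mem_of_forall_mem_sup_pow [IsLocalRing S] [IsNoetherianRing S] {J : Ideal S} {f : S}
    (h : ∀ j, f ∈ J ⊔ maximalIdeal S ^ j) : f ∈ J := by
  rw [← Ideal.Quotient.eq_zero_iff_mem]
  refine IsHausdorff.haus (I := maximalIdeal S) inferInstance _ fun j => ?_
  rw [SModEq.zero]
  obtain ⟨y, hy, z, hz, rfl⟩ := Submodule.mem_sup.1 (h j)
  rw [map_add, Ideal.Quotient.eq_zero_iff_mem.2 hy, zero_add, ← mul_one z, map_mul]
  exact Submodule.smul_mem_smul hz (Submodule.mem_top (x := (1 : S ⧸ J)))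

lemma exists_forall_sub_mem_pow [IsLocalRing S] [IsPrecomplete (maximalIdeal S) S] (t : ℕ)
    {a : ℕ → S} (ha : ∀ k, a (k + 1) - a k ∈ maximalIdeal S ^ (t + k)) :
    ∃ f, ∀ k, a k - f ∈ maximalIdeal S ^ (t + k) := by
  have cauchy : AdicCompletion.IsAdicCauchy (maximalIdeal S) S fun n => a (n - t) := by
    rw [AdicCompletion.isAdicCauchy_iff]
    intro n
    rcases lt_or_ge n t with hn | hn
    · rw [Nat.sub_eq_zero_of_le hn.le, Nat.sub_eq_zero_of_le hn]
    · obtain ⟨k, rfl⟩ := Nat.exists_eq_add_of_le hn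
      refine (SModEq.sub_mem.2 ?_).symm
      simpa [Nat.add_assoc] using ha k
  obtain ⟨f, hf⟩ := IsPrecomplete.prec' _ cauchy
  exact ⟨f, fun k => by simpa [SModEq.sub_mem] using hf (t + k)⟩

theorem exists_le_pow_of_iInf_eq_bot [IsLocalRing S] [IsNoetherianRing S]
    [IsPrecomplete (maximalIdeal S) S] {J : ℕ → Ideal S} (hJ : Antitone J)
    (iInf_eq : ⨅ l, J l = ⊥) (t : ℕ) : ∃ l, J l ≤ maximalIdeal S ^ t := by
  choose L hL using exists_forall_sup_pow_eq hJ
  let K (j : ℕ) : Ideal S := J (L j) ⊔ maximalIdeal S ^ j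
  have K_le (j l : ℕ) : K j ≤ J l ⊔ maximalIdeal S ^ j := by
    rw [show K j = _ from (hL j _ (le_max_left (L j) l)).symm]
    exact sup_le_sup_right (hJ (le_max_right _ _)) _
  by_contra! not_le
  obtain ⟨x, hx, hxt⟩ := SetLike.not_le_iff_exists.1 (not_le (L t))
  obtain ⟨a, rfl, haK, ha⟩ := exists_seq_of_le_sup (K := fun k => K (t + k))
    (Q := fun k => maximalIdeal S ^ (t + k))
    (fun k => (K_le _ (L (t + (k + 1)))).trans (sup_le_sup_right le_sup_left _))
    (x := x) (Ideal.mem_sup_left hx)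
  obtain ⟨f, hf⟩ := exists_forall_sub_mem_pow t ha
  have f_mem (l : ℕ) : f ∈ J l := mem_of_forall_mem_sup_pow fun k => by
    rw [← sub_sub_cancel (a k) f]
    have pow_le : maximalIdeal S ^ (t + k) ≤ maximalIdeal S ^ k :=
      Ideal.pow_le_pow_right (Nat.le_add_left k t)
    exact Ideal.sub_mem _ ((K_le _ l).trans (sup_le_sup_left pow_le _) (haK k))
      (Ideal.mem_sup_right (pow_le (hf k)))
  have f_eq : f = 0 := by simpa [iInf_eq] using (Ideal.mem_iInf.2 f_mem)
  exact hxt (by simpa [f_eq] using hf 0)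

end Completion

section Saturation

variable {S : Type*} [CommRing S] [IsLocalRing S]

/-- The saturation of an ideal with respect to the maximal ideal: the elements that some power of
the maximal ideal multiplies into `J`. -/
def saturation (J : Ideal S) : Ideal S :=
  ⨆ e : ℕ, J.colon (maximalIdeal S ^ e : Ideal S)

lemma monotone_colon_maximalIdeal_pow (J : Ideal S) :
    Monotone fun e : ℕ => J.colon (maximalIdeal S ^ e : Ideal S) :=
  fun _ _ hle => Submodule.colon_mono le_rfl (Ideal.pow_le_pow_right hle)

lemma mem_saturation {J : Ideal S} {f : S} :
    f ∈ saturation J ↔ ∃ e : ℕ, ∀ a ∈ maximalIdeal S ^ e, a * f ∈ J := by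
  rw [saturation, Submodule.mem_iSup_of_directed _ (monotone_colon_maximalIdeal_pow J).directed_le]
  simp only [Submodule.mem_colon, SetLike.mem_coe, smul_eq_mul, mul_comm f]

lemma le_saturation (J : Ideal S) : J ≤ saturation J :=
  Ideal.le_colon.trans (le_iSup (fun e : ℕ => J.colon (maximalIdeal S ^ e : Ideal S)) 0)

lemma saturation_mono {J K : Ideal S} (hJK : J ≤ K) : saturation J ≤ saturation K :=
  iSup_mono fun _ => Submodule.colon_mono hJK subset_rfl

lemma exists_maximalIdeal_pow_mul_saturation_le [IsNoetherianRing S] (J : Ideal S) :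
    ∃ e, maximalIdeal S ^ e * saturation J ≤ J := by
  obtain ⟨e, he⟩ : ∃ e : ℕ, saturation J = J.colon (maximalIdeal S ^ e : Ideal S) :=
    ⟨_, WellFoundedGT.iSup_eq_monotonicSequenceLimit ⟨_, monotone_colon_maximalIdeal_pow J⟩⟩
  refine ⟨e, Ideal.mul_le.2 fun a ha f hf => ?_⟩
  rw [he, Submodule.mem_colon] at hf
  simpa [mul_comm] using hf a ha

lemma mem_saturation_of_maximalIdeal_mul_mem [IsNoetherianRing S] {J : Ideal S} {f : S}
    (hf : ∀ a ∈ maximalIdeal S, a * f ∈ saturation J) : f ∈ saturation J := by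
  obtain ⟨e, he⟩ := exists_maximalIdeal_pow_mul_saturation_le J
  refine mem_saturation.2 ⟨e + 1, fun a ha => ?_⟩
  rw [pow_succ] at ha
  induction ha using Submodule.mul_induction_on' with
  | mem_mul_mem b hb c hc => exact mul_assoc b c f ▸ he (Ideal.mul_mem_mul hb (hf c hc))
  | add b _ c _ hb hc => exact add_mul b c f ▸ J.add_mem hb hc

lemma exists_maximalIdeal_pow_le_of_forall_mem_saturation_pow [IsNoetherianRing S] [IsDomain S]
    {I : Ideal S} {f : S} (f_ne : f ≠ 0) (hf : ∀ l, f ∈ saturation (I ^ l)) :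
    ∃ e, maximalIdeal S ^ e ≤ I := by
  obtain ⟨k, hk⟩ := Ideal.exists_pow_inf_eq_pow_smul I (Ideal.span {f})
  have inf_le : I ^ (k + 1) ⊓ Ideal.span {f} ≤ I * Ideal.span {f} := by
    have artin_rees := hk (k + 1) k.le_succ
    rw [smul_eq_mul, Ideal.mul_top, Nat.add_sub_cancel_left, pow_one] at artin_rees
    exact artin_rees.le.trans (Submodule.smul_mono le_rfl inf_le_right)
  obtain ⟨e, he⟩ := mem_saturation.1 (hf (k + 1))
  refine ⟨e, fun a ha => ?_⟩
  obtain ⟨b, hb, mul_eq⟩ := Ideal.mem_mul_span_singleton.1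
    (inf_le ⟨he a ha, Ideal.mul_mem_left _ a (Ideal.mem_span_singleton_self f)⟩)
  rwa [← mul_right_cancel₀ f_ne mul_eq]

lemma exists_saturation_pow_le_maximalIdeal_pow_of_isPrecomplete [IsNoetherianRing S] [IsDomain S]
    [IsPrecomplete (maximalIdeal S) S] {I : Ideal S} (hI : ∀ e, ¬ maximalIdeal S ^ e ≤ I) (t : ℕ) :
    ∃ l, saturation (I ^ l) ≤ maximalIdeal S ^ t := by
  refine exists_le_pow_of_iInf_eq_bot (fun _ _ hle => saturation_mono (Ideal.pow_le_pow_right hle))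
    ((Submodule.eq_bot_iff _).2 fun f hf => ?_) t
  by_contra f_ne
  obtain ⟨e, he⟩ :=
    exists_maximalIdeal_pow_le_of_forall_mem_saturation_pow f_ne (Ideal.mem_iInf.1 hf)
  exact hI e he

lemma map_saturation_le {A : Type*} [CommRing A] [IsLocalRing A] [Algebra S A]
    (map_eq : maximalIdeal A = (maximalIdeal S).map (algebraMap S A)) (J : Ideal S) :
    (saturation J).map (algebraMap S A) ≤ saturation (J.map (algebraMap S A)) := by
  refine Ideal.map_le_of_le_comap fun f hf => ?_
  obtain ⟨e, he⟩ := mem_saturation.1 hf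
  have pow_le_colon : maximalIdeal A ^ e ≤ (J.map (algebraMap S A)).colon {algebraMap S A f} := by
    rw [map_eq, ← Ideal.map_pow]
    refine Ideal.map_le_of_le_comap fun a ha => Submodule.mem_colon_singleton.2 ?_
    rw [smul_eq_mul, ← map_mul]
    exact Ideal.mem_map_of_mem _ (he a ha)
  exact mem_saturation.2 ⟨e, fun a ha => Submodule.mem_colon_singleton.1 (pow_le_colon ha)⟩

lemma exists_saturation_pow_le_maximalIdeal_pow {S : Type*} [CommRing S] [IsRegularLocalRing S]
    {I : Ideal S} (hI : ∀ e, ¬ maximalIdeal S ^ e ≤ I) (t : ℕ) :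
    ∃ l, saturation (I ^ l) ≤ maximalIdeal S ^ t := by
  let A := AdicCompletion (maximalIdeal S) S
  have : IsRegularLocalRing A := isRegularLocalRing_adicCompletion
  have : Module.FaithfullyFlat S A := .of_flat_of_isLocalHom
  have map_max_pow (e : ℕ) : maximalIdeal A ^ e = (maximalIdeal S ^ e).map (algebraMap S A) := by
    rw [AdicCompletion.maximalIdeal_eq_map, Ideal.map_pow]
  have le_iff (J K : Ideal S) : J.map (algebraMap S A) ≤ K.map (algebraMap S A) ↔ J ≤ K := by
    rw [Ideal.map_le_iff_le_comap, Ideal.comap_map_eq_self_of_faithfullyFlat]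
  obtain ⟨l, hl⟩ := exists_saturation_pow_le_maximalIdeal_pow_of_isPrecomplete
    (I := I.map (algebraMap S A)) (fun e => by rw [map_max_pow, le_iff]; exact hI e) t
  refine ⟨l, ?_⟩
  rw [← le_iff, ← map_max_pow]
  refine (map_saturation_le AdicCompletion.maximalIdeal_eq_map _).trans ?_
  rwa [Ideal.map_pow]

theorem exists_saturation_pow_le_pow {S : Type*} [CommRing S] [IsRegularLocalRing S]
    {I : Ideal S} (hI : ∀ e, ¬ maximalIdeal S ^ e ≤ I) (k : ℕ) :
    ∃ l, k ≤ l ∧ saturation (I ^ l) ≤ I ^ k := by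
  obtain ⟨e, he⟩ := exists_maximalIdeal_pow_mul_saturation_le (I ^ k)
  obtain ⟨c, hc⟩ := Ideal.exists_pow_inf_eq_pow_smul (maximalIdeal S) (saturation (I ^ k))
  have inf_le : maximalIdeal S ^ (c + e) ⊓ saturation (I ^ k) ≤ I ^ k := by
    have artin_rees := hc (c + e) (Nat.le_add_right c e)
    rw [smul_eq_mul, Ideal.mul_top, Nat.add_sub_cancel_left] at artin_rees
    exact artin_rees.le.trans ((Submodule.smul_mono le_rfl inf_le_right).trans he)
  obtain ⟨l, hl⟩ := exists_saturation_pow_le_maximalIdeal_pow hI (c + e)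
  refine ⟨max k l, le_max_left k l, (le_inf ?_ ?_).trans inf_le⟩
  · exact (saturation_mono (Ideal.pow_le_pow_right (le_max_right k l))).trans hl
  · exact saturation_mono (Ideal.pow_le_pow_right (le_max_left k l))

end Saturation

section ProjectiveDimension

variable {R : Type u} [CommRing R]

/-- The `R`-module `M` has projective dimension at most `n`: Mathlib's `HasProjectiveDimensionLE`
for unbundled modules. -/
abbrev HasProjDimLE (R : Type u) [CommRing R] (M : Type u) [AddCommGroup M] [Module R M]
    (n : ℕ) : Prop :=
  HasProjectiveDimensionLE (ModuleCat.of R M) n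

section ShortExact

variable {A B C M M' : Type u} [AddCommGroup A] [Module R A] [AddCommGroup B] [Module R B]
  [AddCommGroup C] [Module R C] [AddCommGroup M] [Module R M] [AddCommGroup M'] [Module R M']
  {f : A →ₗ[R] B} {g : B →ₗ[R] C} {n : ℕ}

lemma shortExact_of_exact (hf : Function.Injective f) (hg : Function.Surjective g)
    (hfg : Function.Exact f g) :
    (ModuleCat.shortComplexOfCompEqZero f g hfg.linearMap_comp_eq_zero).ShortExact :=
  ModuleCat.shortComplex_shortExact _ hfg hf hg

lemma hasProjDimLE_middle (hf : Function.Injective f) (hg : Function.Surjective g)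
    (hfg : Function.Exact f g) (hA : HasProjDimLE R A n) (hC : HasProjDimLE R C n) :
    HasProjDimLE R B n :=
  (shortExact_of_exact hf hg hfg).hasProjectiveDimensionLT_X₂ (n + 1) hA hC

lemma hasProjDimLE_right (hf : Function.Injective f) (hg : Function.Surjective g)
    (hfg : Function.Exact f g) (hA : HasProjDimLE R A n) (hB : HasProjDimLE R B (n + 1)) :
    HasProjDimLE R C (n + 1) :=
  (shortExact_of_exact hf hg hfg).hasProjectiveDimensionLT_X₃ (n + 1) hA hB

lemma hasProjDimLE_left (hf : Function.Injective f) (hg : Function.Surjective g)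
    (hfg : Function.Exact f g) (hB : HasProjDimLE R B n) (hC : HasProjDimLE R C (n + 1)) :
    HasProjDimLE R A n :=
  (shortExact_of_exact hf hg hfg).hasProjectiveDimensionLT_X₁ (n + 1) hB hC

lemma hasProjDimLE_zero_iff : HasProjDimLE R M 0 ↔ Module.Projective R M := by
  rw [HasProjDimLE, ← projective_iff_hasProjectiveDimensionLE_zero, ← IsProjective.iff_projective]

lemma HasProjDimLE.mono {m : ℕ} (hM : HasProjDimLE R M n) (hnm : n ≤ m) : HasProjDimLE R M m :=
  hasProjectiveDimensionLT_of_ge _ (n + 1) (m + 1) (by lia)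

lemma hasProjDimLE_of_projective [Module.Projective R M] (n : ℕ) : HasProjDimLE R M n :=
  (hasProjDimLE_zero_iff.2 ‹_›).mono n.zero_le

lemma HasProjDimLE.of_linearEquiv (hM : HasProjDimLE R M n) (e : M ≃ₗ[R] M') :
    HasProjDimLE R M' n :=
  ModuleCat.hasProjectiveDimensionLE_of_linearEquiv (M := ModuleCat.of R M) (N := .of R M') e n

lemma HasProjDimLE.of_retract (hM : HasProjDimLE R M n) (i : M' →ₗ[R] M) (p : M →ₗ[R] M')
    (hpi : p ∘ₗ i = LinearMap.id) : HasProjDimLE R M' n :=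
  Retract.hasProjectiveDimensionLT (Y := ModuleCat.of R M)
    { i := ModuleCat.ofHom i
      r := ModuleCat.ofHom p
      retract := by rw [← ModuleCat.ofHom_comp, hpi]; rfl } (n + 1)

lemma HasProjDimLE.localizedModule (hM : HasProjDimLE R M n) (S : Submonoid R) {Mₛ : Type u}
    [AddCommGroup Mₛ] [Module R Mₛ] [Module (Localization S) Mₛ]
    [IsScalarTower R (Localization S) Mₛ] (φ : M →ₗ[R] Mₛ) [IsLocalizedModule S φ] :
    HasProjDimLE (Localization S) Mₛ n :=
  have := ModuleCat.localizedModule_hasProjectiveDimensionLE n S (ModuleCat.of R M)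
  have := ModuleCat.localizedModule_isLocalizedModule (ModuleCat.of R M) S
  ModuleCat.hasProjectiveDimensionLE_of_linearEquiv (M := (ModuleCat.of R M).localizedModule S)
    (N := .of _ Mₛ) ((IsLocalizedModule.linearEquiv (M := ModuleCat.of R M) S
      ((ModuleCat.of R M).localizedModuleMkLinearMap S) φ).extendScalarsOfIsLocalization S _) n

end ShortExact

section RegularElement

variable {M : Type u} [AddCommGroup M] [Module R M]

lemma hasProjDimLE_quotSMulTop_succ_iff [IsLocalRing R] [IsNoetherianRing R] [Module.Finite R M]
    {x : R} (hx : x ∈ maximalIdeal R) (hreg : IsSMulRegular M x) (n : ℕ) :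
    HasProjDimLE R (QuotSMulTop x M) (n + 1) ↔ HasProjDimLE R M n := by
  have pd_eq : projectiveDimension (ModuleCat.of R (QuotSMulTop x M)) =
      projectiveDimension (ModuleCat.of R M) + 1 :=
    ModuleCat.projectiveDimension_quotSMulTop_eq_succ_of_isSMulRegular (.of R M) x hreg hx
  rw [HasProjDimLE, HasProjDimLE, ← projectiveDimension_le_iff, ← projectiveDimension_le_iff,
    pd_eq, Nat.cast_add, Nat.cast_one, ENat.WithBot.add_le_add_one_right_iff]

/-- `(R/J)/y(R/J) ≃ R/(J + (y))`. -/
def quotSMulTopQuotientEquiv (J : Ideal R) (y : R) :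
    QuotSMulTop y (R ⧸ J) ≃ₗ[R] R ⧸ (J ⊔ Ideal.span {y}) :=
  Submodule.quotEquivOfEq _ _ (by
    rw [← Submodule.ideal_span_singleton_smul, ← Submodule.range_mkQ, LinearMap.range_eq_map,
      ← Submodule.map_smul'', smul_eq_mul, Ideal.mul_top]) ≪≫ₗ
  Submodule.quotientQuotientEquivQuotientSup J (Ideal.span {y})

lemma quotSMulTop_map_subtype_ker_injective {N : Type*} [AddCommGroup N] [Module R N] {x : R}
    (π : M →ₗ[R] N) (hN : IsSMulRegular N x) :
    Function.Injective (QuotSMulTop.map x (LinearMap.ker π).subtype) := by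
  have exact_zero : Function.Exact (0 : R →ₗ[R] LinearMap.ker π) (LinearMap.ker π).subtype :=
    (LinearMap.exact_zero_iff_injective _ _).2 (Submodule.injective_subtype _)
  have := QuotSMulTop.map_first_exact_on_four_term_exact_of_isSMulRegular_last exact_zero
    (LinearMap.exact_subtype_ker_map π) hN
  rw [map_zero] at this
  exact (LinearMap.exact_zero_iff_injective _ _).1 this

theorem HasProjDimLE.quotSMulTop {x : R} (hx : IsSMulRegular R x) (hM : IsSMulRegular M x)
    {n : ℕ} (h : HasProjDimLE R M n) :
    HasProjDimLE (R ⧸ Ideal.span {x}) (QuotSMulTop x M) n := by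
  have surj : Function.Surjective (algebraMap R (R ⧸ Ideal.span {x})) :=
    Ideal.Quotient.mk_surjective
  induction n generalizing M with
  | zero =>
    rw [hasProjDimLE_zero_iff] at *
    exact .of_equiv ((QuotSMulTop.equivQuotTensor x M).extendScalarsOfSurjective surj).symm
  | succ n ih =>
    let π : (M →₀ R) →ₗ[R] M := Finsupp.linearCombination R id
    have hπ : Function.Surjective π := Finsupp.linearCombination_id_surjective R M
    let K := LinearMap.ker π
    have exact_ker : Function.Exact K.subtype π := LinearMap.exact_subtype_ker_map π
    have inj_ker : Function.Injective K.subtype := K.injective_subtype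
    have regular_free : IsSMulRegular (M →₀ R) x := fun a b hab =>
      Finsupp.ext fun i => hx (DFunLike.congr_fun hab i)
    have pd_ker : HasProjDimLE R K n :=
      hasProjDimLE_left inj_ker hπ exact_ker (hasProjDimLE_of_projective n) h
    exact hasProjDimLE_right
      (f := (QuotSMulTop.map (M := K) (M' := M →₀ R) x K.subtype).extendScalarsOfSurjective surj)
      (g := (QuotSMulTop.map x π).extendScalarsOfSurjective surj)
      (quotSMulTop_map_subtype_ker_injective π hM) (QuotSMulTop.map_surjective x hπ)
      (QuotSMulTop.map_exact x exact_ker hπ)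
      (ih (regular_free.of_injective K.subtype inj_ker) pd_ker) (hasProjDimLE_of_projective _)

end RegularElement

section Residue

lemma hasProjDimLE_of_forall_isPrime [IsNoetherianRing R] {J : Ideal R} {n : ℕ}
    (hJ : ∀ p : Ideal R, p.IsPrime → J ≤ p → HasProjDimLE R (R ⧸ p) n) {M : Type u}
    [AddCommGroup M] [Module R M] [hM : Module.Finite R M] (hJM : J ≤ Module.annihilator R M) :
    HasProjDimLE R M n := by
  induction hM using IsNoetherianRing.induction_on_isQuotientEquivQuotientPrime R with
  | subsingleton N => exact hasProjDimLE_of_projective n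
  | quotient N p e =>
    rw [e.annihilator_eq, Ideal.annihilator_quotient] at hJM
    exact (hJ p.1 p.2 hJM).of_linearEquiv e.symm
  | exact N₁ N₂ N₃ f g hf hg hfg ih₁ ih₃ =>
    exact hasProjDimLE_middle hf hg hfg
      (ih₁ (hJM.trans (LinearMap.annihilator_le_of_injective f hf)))
      (ih₃ (hJM.trans (LinearMap.annihilator_le_of_surjective g hg)))

lemma isSMulRegular_quotient_of_notMem {p : Ideal R} (hp : p.IsPrime) {x : R} (hx : x ∉ p) :
    IsSMulRegular (R ⧸ p) x :=
  (isSMulRegular_quotient_iff_mem_of_smul_mem _ _).2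
    fun _ ha => (hp.mem_or_mem ha).resolve_left hx

variable [IsLocalRing R]

lemma hasProjDimLE_quotient_of_isPrime [IsNoetherianRing R] {n : ℕ}
    (hk : HasProjDimLE R (R ⧸ maximalIdeal R) n) (p : Ideal R) (hp : p.IsPrime) :
    HasProjDimLE R (R ⧸ p) n := by
  induction p using WellFoundedGT.induction with
  | ind p ih =>
    by_cases hpm : maximalIdeal R ≤ p
    · rwa [(le_maximalIdeal hp.ne_top).antisymm hpm]
    obtain ⟨x, hx, hxp⟩ := SetLike.not_le_iff_exists.1 hpm
    rw [← hasProjDimLE_quotSMulTop_succ_iff hx (isSMulRegular_quotient_of_notMem hp hxp)]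
    have pd_quot : HasProjDimLE R (QuotSMulTop x (R ⧸ p)) n := by
      refine hasProjDimLE_of_forall_isPrime (J := p ⊔ Ideal.span {x}) (fun q hq hle => ?_) ?_
      · refine ih q (lt_of_le_of_ne (le_sup_left.trans hle) fun h => hxp ?_) hq
        exact h ▸ hle (Ideal.mem_sup_right (Ideal.mem_span_singleton_self x))
      · rw [sup_le_iff, Ideal.span_singleton_le_iff_mem]
        refine ⟨?_, QuotSMulTop.mem_annihilator _ x⟩
        conv_lhs => rw [← Ideal.annihilator_quotient (I := p)]
        exact LinearMap.annihilator_le_of_surjective _ (Submodule.mkQ_surjective _)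
    exact pd_quot.mono n.le_succ

theorem hasProjDimLE_of_residueField [IsNoetherianRing R] {n : ℕ}
    (hk : HasProjDimLE R (R ⧸ maximalIdeal R) n) (M : Type u) [AddCommGroup M] [Module R M]
    [Module.Finite R M] : HasProjDimLE R M n :=
  hasProjDimLE_of_forall_isPrime (fun p hp _ => hasProjDimLE_quotient_of_isPrime hk p hp) bot_le

lemma IsRegularSystemOfParameters.notMem_span_erase [DecidableEq R] [IsNoetherianRing R]
    {s : Finset R} (hs : IsRegularSystemOfParameters s) {y : R} (hy : y ∈ s) :
    y ∉ Ideal.span (s.erase y : Set R) := by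
  intro hmem
  have span_eq : Ideal.span (s.erase y : Set R) = maximalIdeal R := by
    rw [← hs.1, ← Finset.insert_erase hy, Finset.coe_insert, Ideal.span_insert,
      Finset.erase_insert (s.notMem_erase y), eq_comm, sup_eq_right,
      Ideal.span_singleton_le_iff_mem]
    exact hmem
  have card_lt := Finset.card_erase_lt_of_mem hy
  have herase := isRegularSystemOfParameters_of_card_le span_eq
    (by rw [← hs.2]; exact_mod_cast card_lt.le)
  exact card_lt.ne (by exact_mod_cast herase.2.trans hs.2.symm)

lemma IsRegularSystemOfParameters.isSMulRegular [DecidableEq R] [IsNoetherianRing R]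
    {s t : Finset R} (hs : IsRegularSystemOfParameters s) {y : R} (hyt : y ∉ t)
    (hts : insert y t ⊆ s) : IsSMulRegular (R ⧸ Ideal.span (t : Set R)) y := by
  classical
  have hts' := (Finset.subset_insert y t).trans hts
  have hys := hts (Finset.mem_insert_self y t)
  have hy : y ∉ Ideal.span (t : Set R) := fun h => hs.notMem_span_erase hys
    (Ideal.span_mono (Finset.coe_subset.2 (Finset.subset_erase.2 ⟨hts', hyt⟩)) h)
  have := isLocalRing_quotient ((Ideal.span_mono (Finset.coe_subset.2 hts')).trans hs.1.le)
  have := (hs.quotient hts').isRegularLocalRing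
  have prime := (Ideal.Quotient.isDomain_iff_prime (Ideal.span (t : Set R))).1 inferInstance
  exact isSMulRegular_quotient_of_notMem prime hy

theorem hasProjDimLE_residueField {R : Type u} [CommRing R] [IsRegularLocalRing R] {N : ℕ}
    (hN : ringKrullDim R = N) : HasProjDimLE R (R ⧸ maximalIdeal R) N := by
  classical
  obtain ⟨s, hs⟩ := exists_isRegularSystemOfParameters R
  have pd_span (t : Finset R) (hts : t ⊆ s) :
      HasProjDimLE R (R ⧸ Ideal.span (t : Set R)) t.card := by
    induction t using Finset.induction_on with
    | empty =>
      exact (hasProjDimLE_of_projective _).of_linearEquiv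
        (Submodule.quotEquivOfEqBot _ (by simp)).symm
    | insert y t hyt ih =>
      have hy : y ∈ maximalIdeal R := hs.1 ▸ Ideal.subset_span (hts (Finset.mem_insert_self y t))
      have pd_quot := (hasProjDimLE_quotSMulTop_succ_iff hy (hs.isSMulRegular hyt hts) t.card).2
        (ih ((Finset.subset_insert y t).trans hts))
      rw [Finset.card_insert_of_notMem hyt, Finset.coe_insert, Ideal.span_insert, sup_comm]
      exact pd_quot.of_linearEquiv (quotSMulTopQuotientEquiv _ y)
  have card_eq : s.card = N := by exact_mod_cast hs.2.trans hN
  have pd_max := pd_span s subset_rfl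
  rwa [hs.1, card_eq] at pd_max

lemma hasProjDimLE_residueField_zero_of_mem_associatedPrimes [IsNoetherianRing R]
    (hm : maximalIdeal R ∈ associatedPrimes R R) {n : ℕ}
    (hk : HasProjDimLE R (R ⧸ maximalIdeal R) n) : HasProjDimLE R (R ⧸ maximalIdeal R) 0 := by
  obtain ⟨-, f, hf⟩ := (isAssociatedPrime_iff_exists_injective_linearMap _ _).1 hm
  induction n with
  | zero => exact hk
  | succ n ih =>
    exact ih (hasProjDimLE_left hf (Submodule.mkQ_surjective (LinearMap.range f))
      (LinearMap.exact_map_mkQ_range f) (hasProjDimLE_of_projective n)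
      (hasProjDimLE_of_residueField hk _))

lemma maximalIdeal_eq_bot_of_projective_residueField
    [Module.Projective R (R ⧸ maximalIdeal R)] : maximalIdeal R = ⊥ := by
  obtain ⟨σ, hσ⟩ := Module.projective_lifting_property (maximalIdeal R).mkQ LinearMap.id
    (Submodule.mkQ_surjective _)
  have mk_eq_one : Ideal.Quotient.mk (maximalIdeal R) (σ 1) = 1 := LinearMap.congr_fun hσ 1
  have isUnit : IsUnit (σ 1) := by
    rw [← notMem_maximalIdeal, ← Ideal.Quotient.eq_zero_iff_mem, mk_eq_one]
    exact one_ne_zero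
  refine eq_bot_iff.2 fun a ha => isUnit.mul_left_eq_zero.1 ?_
  rw [← smul_eq_mul, ← map_smul, Algebra.smul_def, mul_one, Ideal.Quotient.algebraMap_eq,
    Ideal.Quotient.eq_zero_iff_mem.2 ha, map_zero]

end Residue

section Serre

variable [IsLocalRing R]

lemma HasProjDimLE.residueField_of_functional {M : Type u} [AddCommGroup M] [Module R M] {n : ℕ}
    (hM : HasProjDimLE R M n) {m : M} (hm : ∀ a ∈ maximalIdeal R, a • m = 0)
    {l : M →ₗ[R] R ⧸ maximalIdeal R} (hl : l m = 1) :
    HasProjDimLE R (R ⧸ maximalIdeal R) n := by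
  refine hM.of_retract (Submodule.liftQ (maximalIdeal R) (LinearMap.toSpanSingleton R M m)
    fun a ha => hm a ha) l (Submodule.linearMap_qext _ (LinearMap.ext_ring ?_))
  change l ((1 : R) • m) = 1
  rw [one_smul, hl]

lemma exists_linearMap_residueField_eq_one {x : R} (hx : x ∈ maximalIdeal R)
    (hx2 : x ∉ maximalIdeal R ^ 2) :
    ∃ l : maximalIdeal R →ₗ[R] R ⧸ maximalIdeal R, l ⟨x, hx⟩ = 1 := by
  have cotangent_ne_zero : ((maximalIdeal R).toCotangent ⟨x, hx⟩ : CotangentSpace R) ≠ 0 :=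
    ((maximalIdeal R).toCotangent_eq_zero _).not.2 hx2
  obtain ⟨f, hf⟩ := Module.Projective.exists_dual_eq_one (ResidueField R) cotangent_ne_zero
  exact ⟨f.restrictScalars R ∘ₗ (maximalIdeal R).toCotangent, hf⟩

lemma exists_linearMap_quotSMulTop_maximalIdeal_eq_one {x : R} (hx : x ∈ maximalIdeal R)
    (hx2 : x ∉ maximalIdeal R ^ 2) [IsLocalRing (R ⧸ Ideal.span {x})] :
    ∃ l : QuotSMulTop x (maximalIdeal R) →ₗ[R ⧸ Ideal.span {x}]
      (R ⧸ Ideal.span {x}) ⧸ maximalIdeal (R ⧸ Ideal.span {x}),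
      l (Submodule.Quotient.mk ⟨x, hx⟩) = 1 := by
  obtain ⟨l, hl⟩ := exists_linearMap_residueField_eq_one hx hx2
  set R' := R ⧸ Ideal.span {x}
  have algebraMap_eq_zero {a : R} (ha : a ∈ maximalIdeal R) :
      algebraMap R (R' ⧸ maximalIdeal R') a = 0 := by
    refine Ideal.Quotient.eq_zero_iff_mem.2 ?_
    rw [maximalIdeal_quotient]
    exact Ideal.mem_map_of_mem _ ha
  let c : (R ⧸ maximalIdeal R) →ₗ[R] R' ⧸ maximalIdeal R' :=
    (maximalIdeal R).liftQ (Algebra.linearMap R _) fun a ha => algebraMap_eq_zero ha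
  let lbar : QuotSMulTop x (maximalIdeal R) →ₗ[R] R' ⧸ maximalIdeal R' :=
    Submodule.liftQ _ (c ∘ₗ l) (by
      rintro - ⟨b, -, rfl⟩
      change (c ∘ₗ l) (x • b) = 0
      rw [map_smul, Algebra.smul_def, algebraMap_eq_zero hx, zero_mul])
  refine ⟨lbar.extendScalarsOfSurjective Ideal.Quotient.mk_surjective, ?_⟩
  change c (l ⟨x, hx⟩) = 1
  rw [hl]
  exact map_one (algebraMap R (R' ⧸ maximalIdeal R'))

-- Since `x ∉ m ^ 2`, the class of `x` spans a copy of the residue field that splits off `m / x m`.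
lemma HasProjDimLE.residueField_quotient {x : R} (hx : x ∈ maximalIdeal R)
    (hx2 : x ∉ maximalIdeal R ^ 2) [IsLocalRing (R ⧸ Ideal.span {x})] {n : ℕ}
    (h : HasProjDimLE (R ⧸ Ideal.span {x}) (QuotSMulTop x (maximalIdeal R)) n) :
    HasProjDimLE (R ⧸ Ideal.span {x})
      ((R ⧸ Ideal.span {x}) ⧸ maximalIdeal (R ⧸ Ideal.span {x})) n := by
  obtain ⟨l, hl⟩ := exists_linearMap_quotSMulTop_maximalIdeal_eq_one hx hx2
  refine h.residueField_of_functional (fun a ha => ?_) hl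
  rw [maximalIdeal_quotient, Ideal.mem_map_iff_of_surjective _ Ideal.Quotient.mk_surjective] at ha
  obtain ⟨a, ha, rfl⟩ := ha
  refine (Submodule.Quotient.mk_eq_zero _).2 ?_
  exact (Submodule.mem_smul_pointwise_iff_exists _ _ _).2
    ⟨⟨a, ha⟩, trivial, Subtype.ext (mul_comm _ _)⟩

lemma isRegularLocalRing_of_quotient_span_singleton [IsNoetherianRing R] {x : R}
    (hx : x ∈ maximalIdeal R) [IsRegularLocalRing (R ⧸ Ideal.span {x})]
    (hdim : ringKrullDim (R ⧸ Ideal.span {x}) + 1 ≤ ringKrullDim R) : IsRegularLocalRing R := by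
  classical
  obtain ⟨t, ht⟩ := exists_isRegularSystemOfParameters (R ⧸ Ideal.span {x})
  have surj := Ideal.Quotient.mk_surjective (I := Ideal.span {x})
  obtain ⟨s, rfl, card_eq⟩ : ∃ s : Finset R,
      s.image (Ideal.Quotient.mk (Ideal.span {x})) = t ∧ s.card = t.card :=
    ⟨t.image (Function.surjInv surj), by simp [Finset.image_image, Function.comp_surjInv],
      Finset.card_image_of_injective _ (Function.injective_surjInv surj)⟩
  refine (isRegularSystemOfParameters_of_card_le (s := insert x s) ?_ ?_).isRegularLocalRing
  · have comap_eq := congrArg (Ideal.comap (Ideal.Quotient.mk (Ideal.span {x}))) ht.1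
    rw [Finset.coe_image, ← Ideal.map_span, maximalIdeal_quotient,
      Ideal.comap_map_quotientMk,
      Ideal.comap_map_mk ((Ideal.span_singleton_le_iff_mem _).2 hx)] at comap_eq
    rw [Finset.coe_insert, Ideal.span_insert, comap_eq]
  · calc ((insert x s).card : WithBot ℕ∞) ≤ (s.card + 1 : ℕ) := by
          exact_mod_cast Finset.card_insert_le x s
      _ ≤ ringKrullDim R := by rwa [Nat.cast_add, card_eq, ht.2, Nat.cast_one]

theorem isRegularLocalRing_of_hasProjDimLE_residueField {R : Type u} [CommRing R] [IsLocalRing R]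
    [IsNoetherianRing R] {n : ℕ} (hk : HasProjDimLE R (R ⧸ maximalIdeal R) n) :
    IsRegularLocalRing R := by
  obtain ⟨N, hN⟩ := exists_nat_ringKrullDim_eq R
  induction N using Nat.strong_induction_on generalizing R with
  | _ N ih =>
    by_cases hm : maximalIdeal R = ⊥
    · exact (isRegularSystemOfParameters_of_card_le (s := ∅) (by simp [hm])
        (by simpa using ringKrullDim_nonneg_of_nontrivial)).isRegularLocalRing
    have max_notMem : maximalIdeal R ∉ associatedPrimes R R := fun h => hm <|
      have := hasProjDimLE_zero_iff.1 (hasProjDimLE_residueField_zero_of_mem_associatedPrimes h hk)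
      maximalIdeal_eq_bot_of_projective_residueField
    obtain ⟨x, hx, hx2, avoids⟩ := exists_mem_maximalIdeal_notMem_sq_avoiding hm
      (associatedPrimes.finite R R) (fun p hp => hp.1) max_notMem
    have regular : IsSMulRegular R x := by
      by_contra hcon
      have hmem : x ∈ {x : R | IsSMulRegular R x}ᶜ := hcon
      simp only [← biUnion_associatedPrimes_eq_compl_regular, Set.mem_iUnion] at hmem
      obtain ⟨p, hp, hxp⟩ := hmem
      exact avoids p hp hxp
    have := isLocalRing_quotient ((Ideal.span_singleton_le_iff_mem _).2 hx)
    have hk' := ((hasProjDimLE_of_residueField hk (maximalIdeal R)).quotSMulTop regular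
      (regular.of_injective _ (Submodule.injective_subtype _))).residueField_quotient hx hx2
    have dim_eq := ringKrullDim_quotient_span_singleton_succ_eq_ringKrullDim regular hx
    obtain ⟨d, hd⟩ := exists_nat_ringKrullDim_eq (R ⧸ Ideal.span {x})
    have : d < N := by
      rw [hd, hN] at dim_eq
      exact Nat.lt_of_succ_le (by exact_mod_cast dim_eq.le)
    have := ih d this hk' hd
    exact isRegularLocalRing_of_quotient_span_singleton hx dim_eq.le

instance isRegularLocalRing_localization_atPrime {R : Type u} [CommRing R] [IsRegularLocalRing R]
    (q : Ideal R) [q.IsPrime] : IsRegularLocalRing (Localization.AtPrime q) := by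
  obtain ⟨n, hn⟩ := exists_nat_ringKrullDim_eq R
  have pd_loc := (hasProjDimLE_of_residueField (hasProjDimLE_residueField hn)
    (R ⧸ q)).localizedModule q.primeCompl (Submodule.toLocalizedQuotient'
      (Localization.AtPrime q) q.primeCompl (Algebra.linearMap R (Localization.AtPrime q)) q)
  refine isRegularLocalRing_of_hasProjDimLE_residueField
    (pd_loc.of_linearEquiv (Submodule.quotEquivOfEq _ _ ?_))
  rw [Ideal.localized'_eq_map, Localization.AtPrime.map_eq_maximalIdeal]

end Serre

section SaturationProjDim

variable [IsLocalRing R]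

lemma maximalIdeal_notMem_associatedPrimes_quotient_saturation [IsNoetherianRing R]
    (J : Ideal R) : maximalIdeal R ∉ associatedPrimes R (R ⧸ saturation J) := by
  intro hmem
  obtain ⟨-, f, hf⟩ := (isAssociatedPrime_iff_exists_injective_linearMap _ _).1 hmem
  obtain ⟨g, hg⟩ := Ideal.Quotient.mk_surjective (f 1)
  have f_one_eq_zero : f 1 = 0 := by
    rw [← hg, Ideal.Quotient.eq_zero_iff_mem]
    refine mem_saturation_of_maximalIdeal_mul_mem fun a ha => ?_
    rw [← Ideal.Quotient.eq_zero_iff_mem, map_mul, hg]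
    change a • f 1 = 0
    rw [← map_smul, Algebra.smul_def, mul_one, Ideal.Quotient.algebraMap_eq,
      Ideal.Quotient.eq_zero_iff_mem.2 ha, map_zero]
  exact one_ne_zero (hf (f_one_eq_zero.trans (map_zero f).symm))

lemma exists_mem_maximalIdeal_isSMulRegular_quotient_saturation [IsNoetherianRing R]
    (J : Ideal R) : ∃ x ∈ maximalIdeal R, IsSMulRegular (R ⧸ saturation J) x := by
  by_contra! hcon
  have hsub : (maximalIdeal R : Set R) ⊆
      ⋃ p ∈ associatedPrimes R (R ⧸ saturation J), (p : Set R) := by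
    rw [biUnion_associatedPrimes_eq_compl_regular]
    exact hcon
  obtain ⟨p, hp, hle⟩ := (Ideal.subset_union_prime_finite
    (associatedPrimes.finite R (R ⧸ saturation J)) ⊥ ⊥ fun p hp _ _ => hp.1).1 hsub
  refine maximalIdeal_notMem_associatedPrimes_quotient_saturation J ?_
  rwa [hle.antisymm (le_maximalIdeal hp.1.ne_top)]

theorem hasProjDimLE_quotient_saturation {R : Type u} [CommRing R] [IsRegularLocalRing R] {N : ℕ}
    (hN : ringKrullDim R = (N + 1 : ℕ)) (J : Ideal R) : HasProjDimLE R (R ⧸ saturation J) N := by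
  obtain ⟨x, hx, regular⟩ := exists_mem_maximalIdeal_isSMulRegular_quotient_saturation J
  exact (hasProjDimLE_quotSMulTop_succ_iff hx regular N).1
    (hasProjDimLE_of_residueField (hasProjDimLE_residueField hN) _)

end SaturationProjDim

end ProjectiveDimension

section ExtAnnihilation

variable {R : Type u} [CommRing R]

lemma exists_comp_eq_smul_id_of_projective_localizedModule [IsNoetherianRing R] (q : Ideal R)
    [q.IsPrime] {M F : Type u} [AddCommGroup M] [Module R M] [Module.Finite R M] [AddCommGroup F]
    [Module R F] {π : F →ₗ[R] M} (hπ : Function.Surjective π)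
    [Module.Projective (Localization.AtPrime q) (LocalizedModule q.primeCompl M)] :
    ∃ s ∉ q, ∃ σ : M →ₗ[R] F, π ∘ₗ σ = s • LinearMap.id := by
  let toMq := LocalizedModule.mkLinearMap q.primeCompl M
  let toFq := LocalizedModule.mkLinearMap q.primeCompl F
  let πq := IsLocalizedModule.mapExtendScalars q.primeCompl toFq toMq (Localization.AtPrime q) π
  obtain ⟨τ, hτ⟩ := Module.projective_lifting_property πq LinearMap.id
    (IsLocalizedModule.map_surjective q.primeCompl toFq toMq π hπ)
  have : Module.FinitePresentation R M := Module.finitePresentation_of_finite R M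
  obtain ⟨σ, s, hσ⟩ := Module.FinitePresentation.exists_lift_of_isLocalizedModule q.primeCompl
    toFq (τ.restrictScalars R ∘ₗ toMq)
  have section_after_localizing : toMq ∘ₗ (π ∘ₗ σ) = toMq ∘ₗ ((s : R) • LinearMap.id) := by
    ext x
    calc toMq (π (σ x)) = πq (toFq (σ x)) :=
          (IsLocalizedModule.map_apply q.primeCompl toFq toMq π (σ x)).symm
      _ = πq ((s : R) • τ (toMq x)) := congrArg πq (LinearMap.congr_fun hσ x)
      _ = (s : R) • πq (τ (toMq x)) := LinearMap.map_smul_of_tower πq _ _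
      _ = toMq ((s : R) • x) := by
        rw [map_smul]
        exact congrArg _ (LinearMap.congr_fun hτ (toMq x))
  obtain ⟨t, ht⟩ := Module.Finite.exists_smul_of_comp_eq_of_isLocalizedModule q.primeCompl toMq
    _ _ section_after_localizing
  refine ⟨t * s, (t * s).2, (t : R) • σ, ?_⟩
  rw [LinearMap.comp_smul, mul_smul]
  exact ht

lemma hasProjDimLE_localizedModule_left (S : Submonoid R) {A B C : Type u} [AddCommGroup A]
    [Module R A] [AddCommGroup B] [Module R B] [AddCommGroup C] [Module R C]
    [Module.Projective R B] {f : A →ₗ[R] B} {g : B →ₗ[R] C} (hf : Function.Injective f)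
    (hg : Function.Surjective g) (hfg : Function.Exact f g) {n : ℕ}
    (hC : HasProjDimLE (Localization S) (LocalizedModule S C) (n + 1)) :
    HasProjDimLE (Localization S) (LocalizedModule S A) n := by
  let toA := LocalizedModule.mkLinearMap S A
  let toB := LocalizedModule.mkLinearMap S B
  let toC := LocalizedModule.mkLinearMap S C
  exact hasProjDimLE_left
    (f := IsLocalizedModule.mapExtendScalars S toA toB (Localization S) f)
    (g := IsLocalizedModule.mapExtendScalars S toB toC (Localization S) g)
    (IsLocalizedModule.map_injective S toA toB f hf)
    (IsLocalizedModule.map_surjective S toB toC g hg)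
    (IsLocalizedModule.map_exact S toA toB toC f g hfg)
    ((hasProjDimLE_of_projective n).localizedModule S toB) hC

lemma smul_ext_eq_zero_of_comp_eq_smul_id {X Y P : ModuleCat.{u} R} [Projective P] {σ : X ⟶ P}
    {π : P ⟶ X} {s : R} (h : σ ≫ π = s • 𝟙 X) {n : ℕ} (e : Abelian.Ext.{u} X Y (n + 1)) :
    s • e = 0 :=
  calc s • e = (Abelian.Ext.mk₀ (σ ≫ π)).comp e (zero_add _) := by
        rw [h, Abelian.Ext.mk₀_smul, Abelian.Ext.smul_comp, Abelian.Ext.mk₀_id_comp]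
    _ = (Abelian.Ext.mk₀ σ).comp ((Abelian.Ext.mk₀ π).comp e (zero_add _)) (zero_add _) :=
      (Abelian.Ext.mk₀_comp_mk₀_assoc σ π e).symm
    _ = 0 := by
      rw [Abelian.Ext.eq_zero_of_projective ((Abelian.Ext.mk₀ π).comp e (zero_add _)),
        Abelian.Ext.comp_zero]

theorem exists_notMem_forall_smul_abelianExt_eq_zero [IsNoetherianRing R] (q : Ideal R) [q.IsPrime]
    (Y : ModuleCat.{u} R) {n : ℕ} {M : Type u} [AddCommGroup M] [Module R M] [Module.Finite R M]
    (hM : HasProjDimLE (Localization.AtPrime q) (LocalizedModule q.primeCompl M) n) :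
    ∃ s ∉ q, ∀ e : Abelian.Ext.{u} (ModuleCat.of R M) Y (n + 1), s • e = 0 := by
  induction n generalizing M with
  | zero =>
    obtain ⟨F, _, _, _, _, π, hπ⟩ := Module.exists_finite_presentation R M
    have := hasProjDimLE_zero_iff.1 hM
    obtain ⟨s, hs, σ, hσ⟩ := exists_comp_eq_smul_id_of_projective_localizedModule q hπ
    have : Projective (ModuleCat.of R F) := (IsProjective.iff_projective F).1 inferInstance
    exact ⟨s, hs, smul_ext_eq_zero_of_comp_eq_smul_id
      (σ := ModuleCat.ofHom σ) (π := ModuleCat.ofHom π) (ModuleCat.hom_ext hσ)⟩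
  | succ n ih =>
    obtain ⟨F, _, _, _, _, π, hπ⟩ := Module.exists_finite_presentation R M
    have inj_ker := (LinearMap.ker π).injective_subtype
    have exact_ker := LinearMap.exact_subtype_ker_map π
    obtain ⟨s, hs, smul_eq_zero⟩ :=
      ih (hasProjDimLE_localizedModule_left q.primeCompl inj_ker hπ exact_ker hM)
    refine ⟨s, hs, fun e => ?_⟩
    have : Projective (ModuleCat.of R F) := (IsProjective.iff_projective F).1 inferInstance
    obtain ⟨x, rfl⟩ := Abelian.Ext.contravariant_sequence_exact₃
      (shortExact_of_exact inj_ker hπ exact_ker) Y e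
      (Abelian.Ext.eq_zero_of_projective (P := ModuleCat.of R F) _) (add_comm 1 (n + 1))
    rw [← Abelian.Ext.comp_smul, smul_eq_zero x, Abelian.Ext.comp_zero]

lemma smul_linearYonedaObj_homology_eq_zero {X Y : ModuleCat.{u} R} (P : ProjectiveResolution X)
    {n : ℕ} {s : R} (h : ∀ e : Abelian.Ext.{u} X Y (n + 1), s • e = 0)
    (z : (P.complex.linearYonedaObj R Y).homology (n + 1)) : s • z = 0 := by
  let K := P.complex.linearYonedaObj R Y
  obtain ⟨c, rfl⟩ := (ModuleCat.epi_iff_surjective (K.homologyπ (n + 1))).1 inferInstance z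
  let f : P.complex.X (n + 1) ⟶ Y := K.iCycles (n + 1) c
  have d_comp_f : P.complex.d (n + 2) (n + 1) ≫ f = 0 := by
    change (K.iCycles (n + 1) ≫ K.d (n + 1) (n + 2)) c = 0
    rw [K.iCycles_d]
    rfl
  have d_comp_smul_f : P.complex.d (n + 2) (n + 1) ≫ (s • f) = 0 := by
    rw [Linear.comp_smul, d_comp_f, smul_zero]
  have extMk_smul : P.extMk (s • f) (n + 2) rfl d_comp_smul_f = 0 := by
    rw [← h (P.extMk f (n + 2) rfl d_comp_f), Abelian.Ext.smul_eq_comp_mk₀,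
      ProjectiveResolution.extMk_comp_mk₀]
    congr 1
  obtain ⟨g, hg⟩ : ∃ g : K.X n, K.d n (n + 1) g = s • K.iCycles (n + 1) c :=
    (P.extMk_eq_zero_iff _ _ _ _ n rfl).1 extMk_smul
  have toCycles_g : K.toCycles n (n + 1) g = s • c := by
    apply (ModuleCat.mono_iff_injective (K.iCycles (n + 1))).1 inferInstance
    rw [← ModuleCat.comp_apply, K.toCycles_i, map_smul, hg]
  rw [← map_smul, ← toCycles_g, ← ModuleCat.comp_apply, K.toCycles_comp_homologyπ]
  rfl

lemma smul_ext_eq_zero_of_forall_smul_abelianExt_eq_zero {X Y : ModuleCat.{u} R} {n : ℕ} {s : R}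
    (h : ∀ e : Abelian.Ext.{u} X Y (n + 1), s • e = 0)
    (x : ((Ext R (ModuleCat.{u} R) (n + 1)).obj (Opposite.op X)).obj Y) : s • x = 0 := by
  let homologyIso := ((ProjectiveResolution.of X).isoExt (R := R) (n + 1) Y).toLinearEquiv
  apply homologyIso.injective
  rw [map_smul, map_zero]
  exact smul_linearYonedaObj_homology_eq_zero _ h _

theorem exists_notMem_forall_smul_ext_eq_zero [IsNoetherianRing R] (q : Ideal R) [q.IsPrime]
    (Y : ModuleCat.{u} R) {n : ℕ} {M : Type u} [AddCommGroup M] [Module R M] [Module.Finite R M]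
    (hM : HasProjDimLE (Localization.AtPrime q) (LocalizedModule q.primeCompl M) n) :
    ∃ s ∉ q, ∀ x : ((Ext R (ModuleCat.{u} R) (n + 1)).obj (Opposite.op (.of R M))).obj Y,
      s • x = 0 := by
  obtain ⟨s, hs, smul_eq_zero⟩ := exists_notMem_forall_smul_abelianExt_eq_zero q Y hM
  exact ⟨s, hs, smul_ext_eq_zero_of_forall_smul_abelianExt_eq_zero smul_eq_zero⟩

end ExtAnnihilation

section LocalCohomology

variable {R : Type u} [CommRing R]

lemma exists_mem_smul_eq_zero_of_isColimit {J : Type*} [Category* J] {D : J ⥤ ModuleCat.{u} R}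
    {c : Limits.Cocone D} (hc : Limits.IsColimit c) (S : Submonoid R)
    (h : ∀ j (x : D.obj j), ∃ s ∈ S, s • c.ι.app j x = 0) (x : c.pt) : ∃ s ∈ S, s • x = 0 := by
  let T := Submodule.torsion' R c.pt S
  have mkQ_eq_zero : ModuleCat.ofHom T.mkQ = 0 := hc.hom_ext fun j => by
    ext y
    obtain ⟨s, hs, hsy⟩ := h j y
    exact (Submodule.Quotient.mk_eq_zero T).2 ⟨⟨s, hs⟩, hsy⟩
  obtain ⟨⟨s, hs⟩, hsx⟩ := (Submodule.Quotient.mk_eq_zero T).1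
    (LinearMap.congr_fun (congrArg ModuleCat.Hom.hom mkQ_eq_zero) x)
  exact ⟨s, hs, hsx⟩

lemma smul_ext_map_mapQ_eq_zero {A J B : Ideal R} (hAJ : A ≤ J) (hJB : J ≤ B) (n : ℕ)
    (Y : ModuleCat.{u} R) {s : R}
    (hs : ∀ z : ((Ext R (ModuleCat.{u} R) n).obj (Opposite.op (.of R (R ⧸ J)))).obj Y, s • z = 0)
    (y : ((Ext R (ModuleCat.{u} R) n).obj (Opposite.op (.of R (R ⧸ B)))).obj Y) :
    s • ((Ext R (ModuleCat.{u} R) n).map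
      (ModuleCat.ofHom (Submodule.mapQ A B LinearMap.id (hAJ.trans hJB))).op).app Y y = 0 := by
  have factor : ModuleCat.ofHom (Submodule.mapQ A B LinearMap.id (hAJ.trans hJB)) =
      ModuleCat.ofHom (Submodule.mapQ A J LinearMap.id hAJ) ≫
        ModuleCat.ofHom (Submodule.mapQ J B LinearMap.id hJB) := by
    rw [← ModuleCat.ofHom_comp, ← Submodule.mapQ_comp]
  rw [factor, op_comp, Functor.map_comp, NatTrans.comp_app, ModuleCat.comp_apply, ← map_smul, hs,
    map_zero]

theorem notMem_support_localCohomology_of_hasProjDimLE [IsNoetherianRing R]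
    {q : PrimeSpectrum R} {I : Ideal R} {n : ℕ} (Y : ModuleCat.{u} R)
    (H : ∀ k, ∃ l ≥ k, ∃ J : Ideal R, I ^ l ≤ J ∧ J ≤ I ^ k ∧
      HasProjDimLE (Localization.AtPrime q.asIdeal)
        (LocalizedModule q.asIdeal.primeCompl (R ⧸ J)) n) :
    q ∉ Module.support R ((localCohomology I (n + 1)).obj Y) := by
  let D := localCohomology.diagram (localCohomology.idealPowersDiagram I) (n + 1)
  rw [Module.notMem_support_iff']
  refine exists_mem_smul_eq_zero_of_isColimit (Limits.isColimitOfPreserves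
    ((evaluation (ModuleCat.{u} R) (ModuleCat.{u} R)).obj Y) (Limits.colimit.isColimit D))
    q.asIdeal.primeCompl ?_
  rintro ⟨⟨k⟩⟩ y
  obtain ⟨l, hkl, J, hlJ, hJk, hJ⟩ := H k
  obtain ⟨s, hs, smul_eq_zero⟩ := exists_notMem_forall_smul_ext_eq_zero q.asIdeal Y hJ
  let w : Opposite.op (Opposite.op k) ⟶ Opposite.op (Opposite.op l) := (homOfLE hkl).op.op
  have ι_eq : (Limits.colimit.ι D _).app Y y =
      (Limits.colimit.ι D _).app Y ((D.map w).app Y y) := by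
    rw [← ModuleCat.comp_apply, ← NatTrans.comp_app, Limits.colimit.w]
  have smul_map_eq_zero : s • (D.map w).app Y y = 0 :=
    smul_ext_map_mapQ_eq_zero hlJ hJk (n + 1) Y smul_eq_zero y
  refine ⟨s, hs, (congrArg (s • ·) ι_eq).trans ?_⟩
  exact (map_smul _ _ _).symm.trans ((congrArg _ smul_map_eq_zero).trans (map_zero _))

lemma HasProjDimLE.localizedModule_quotient {q : Ideal R} [q.IsPrime] {J : Ideal R} {n : ℕ}
    (h : HasProjDimLE (Localization.AtPrime q)
      (Localization.AtPrime q ⧸ J.map (algebraMap R (Localization.AtPrime q))) n) :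
    HasProjDimLE (Localization.AtPrime q) (LocalizedModule q.primeCompl (R ⧸ J)) n := by
  let S := Localization.AtPrime q
  rw [← Ideal.localized'_eq_map S q.primeCompl] at h
  exact h.of_linearEquiv ((IsLocalizedModule.iso q.primeCompl (J.toLocalizedQuotient' S
    q.primeCompl (Algebra.linearMap R S))).extendScalarsOfIsLocalization q.primeCompl S).symm

lemma not_maximalIdeal_pow_le_map_of_lt {q p I : Ideal R} [q.IsPrime] [hp : p.IsPrime]
    (hIp : I ≤ p) (hpq : p < q) (e : ℕ) :
    ¬ maximalIdeal (Localization.AtPrime q) ^ e ≤ I.map (algebraMap R _) := by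
  intro hle
  have disjoint : Disjoint (q.primeCompl : Set R) p :=
    Set.disjoint_left.2 fun x hxq hxp => hxq (hpq.le hxp)
  have := IsLocalization.isPrime_of_isPrime_disjoint q.primeCompl (Localization.AtPrime q) p hp
    disjoint
  have maximalIdeal_le : maximalIdeal (Localization.AtPrime q) ≤ p.map (algebraMap R _) :=
    Ideal.IsPrime.le_of_pow_le (hle.trans (Ideal.map_mono hIp))
  rw [← IsLocalization.AtPrime.map_eq_maximalIdeal q, Ideal.map_le_iff_le_comap] at maximalIdeal_le
  exact hpq.not_ge (maximalIdeal_le.trans_eq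
    (IsLocalization.under_map_of_isPrime_disjoint q.primeCompl _ hp disjoint))

lemma exists_pow_le_le_pow_hasProjDimLE {R : Type u} [CommRing R] [IsRegularLocalRing R]
    {I p q : Ideal R} [q.IsPrime] [p.IsPrime] (hIp : I ≤ p) (hpq : p < q) {n : ℕ}
    (hn : ringKrullDim (Localization.AtPrime q) ≤ (n + 1 : ℕ)) (k : ℕ) :
    ∃ l ≥ k, ∃ J : Ideal R, I ^ l ≤ J ∧ J ≤ I ^ k ∧
      HasProjDimLE (Localization.AtPrime q) (LocalizedModule q.primeCompl (R ⧸ J)) n := by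
  let S := Localization.AtPrime q
  let toS := algebraMap R S
  obtain ⟨l, hkl, saturation_le⟩ := exists_saturation_pow_le_pow
    (not_maximalIdeal_pow_le_map_of_lt hIp hpq) k
  let Q := saturation (I.map toS ^ l)
  have map_inf_eq : (Q.comap toS ⊓ I ^ k).map toS = Q := by
    rw [IsLocalization.map_inf q.primeCompl, IsLocalization.map_under q.primeCompl,
      Ideal.map_pow, inf_eq_left]
    exact saturation_le
  refine ⟨l, hkl, Q.comap toS ⊓ I ^ k, le_inf ?_ (Ideal.pow_le_pow_right hkl), inf_le_right,
    HasProjDimLE.localizedModule_quotient ?_⟩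
  · rw [← Ideal.map_le_iff_le_comap, Ideal.map_pow]
    exact le_saturation _
  · rw [map_inf_eq]
    have : 0 < ringKrullDim S := by
      rw [IsLocalization.AtPrime.ringKrullDim_eq_height q]
      exact_mod_cast (zero_le).trans_lt (Ideal.height_strict_mono_of_isPrime hpq)
    obtain ⟨_ | d, hd⟩ := exists_nat_ringKrullDim_eq S
    · exact absurd hd this.ne.symm
    · refine (hasProjDimLE_quotient_saturation hd _).mono ?_
      rw [hd] at hn
      exact Nat.le_of_succ_le_succ (by exact_mod_cast hn)

theorem notMem_support_localCohomology_of_lt {R : Type u} [CommRing R] [IsRegularLocalRing R]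
    {I p : Ideal R} {q : PrimeSpectrum R} [p.IsPrime] (hIp : I ≤ p) (hpq : p < q.asIdeal) {n : ℕ}
    (hn : ringKrullDim (Localization.AtPrime q.asIdeal) ≤ (n + 1 : ℕ)) (Y : ModuleCat.{u} R) :
    q ∉ Module.support R ((localCohomology I (n + 1)).obj Y) :=
  notMem_support_localCohomology_of_hasProjDimLE Y (exists_pow_le_le_pow_hasProjDimLE hIp hpq hn)

lemma notMem_support_localCohomology_of_not_le [IsNoetherianRing R] {I : Ideal R}
    {q : PrimeSpectrum R} (hIq : ¬ I ≤ q.asIdeal) (n : ℕ) (Y : ModuleCat.{u} R) :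
    q ∉ Module.support R ((localCohomology I (n + 1)).obj Y) := by
  refine notMem_support_localCohomology_of_hasProjDimLE Y fun k =>
    ⟨k, le_rfl, I ^ k, le_rfl, le_rfl, ?_⟩
  have : q ∉ Module.support R (R ⧸ I ^ k) := fun hq =>
    hIq (Ideal.IsPrime.le_of_pow_le (Ideal.annihilator_quotient.ge.trans
      (Module.annihilator_le_of_mem_support hq)))
  have := Module.notMem_support_iff.1 this
  exact hasProjDimLE_of_projective n

end LocalCohomology

section Dimension

variable {R : Type u} [CommRing R]

instance wellFoundedLT_primeSpectrum [IsNoetherianRing R] : WellFoundedLT (PrimeSpectrum R) :=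
  StrictMono.wellFoundedLT (f := fun p : PrimeSpectrum R => p.asIdeal.height)
    fun _ _ hpq => Ideal.height_strict_mono_of_isPrime_of_isPrime hpq

lemma ringKrullDim_quotient_asIdeal (q : PrimeSpectrum R) :
    ringKrullDim (R ⧸ q.asIdeal) = Order.coheight q := by
  have zeroLocus_eq : PrimeSpectrum.zeroLocus (q.asIdeal : Set R) = Set.Ici q := rfl
  rw [ringKrullDim_quotient, Order.coheight_eq_krullDim_Ici, zeroLocus_eq]

lemma height_add_ringKrullDim_quotient_le (q : PrimeSpectrum R) :
    q.asIdeal.height + ringKrullDim (R ⧸ q.asIdeal) ≤ ringKrullDim R := by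
  have : Nonempty (PrimeSpectrum R) := ⟨q⟩
  rw [ringKrullDim_quotient_asIdeal, PrimeSpectrum.height_eq_orderHeight, ringKrullDim,
    Order.krullDim_eq_iSup_height_add_coheight_of_nonempty]
  exact_mod_cast le_iSup (fun p : PrimeSpectrum R => Order.height p + Order.coheight p) q

lemma ringKrullDim_localization_atPrime_le_sub {n i : ℕ} (hn : ringKrullDim R = n)
    {q : PrimeSpectrum R} (hq : i ≤ ringKrullDim (R ⧸ q.asIdeal)) :
    ringKrullDim (Localization.AtPrime q.asIdeal) ≤ (n - i : ℕ) := by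
  have height_add_le : (q.asIdeal.height : WithBot ℕ∞) + i ≤ n :=
    (add_le_add_right hq _).trans (hn ▸ height_add_ringKrullDim_quotient_le q)
  rw [IsLocalization.AtPrime.ringKrullDim_eq_height q.asIdeal]
  refine WithBot.coe_le_coe.2 ?_
  rw [ENat.natCast_sub]
  exact ENat.le_sub_of_add_le_right (ENat.natCast_ne_top i) (by exact_mod_cast height_add_le)

theorem ringKrullDim_quotient_lt_of_mem_support_localCohomology [IsRegularLocalRing R]
    {n i : ℕ} (hn : ringKrullDim R = n) (hin : i < n) {I : Ideal R}
    (hi : ∀ p ∈ I.minimalPrimes, i < ringKrullDim (R ⧸ p)) (Y : ModuleCat.{u} R)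
    {q : PrimeSpectrum R} (hq : q ∈ Module.support R ((localCohomology I (n - i)).obj Y)) :
    ringKrullDim (R ⧸ q.asIdeal) < i := by
  obtain ⟨m, hm⟩ : ∃ m, n - i = m + 1 := ⟨n - i - 1, by lia⟩
  rw [hm] at hq
  have hIq : I ≤ q.asIdeal := by
    by_contra hIq
    exact notMem_support_localCohomology_of_not_le hIq m Y hq
  obtain ⟨p, hp, hpq⟩ := Ideal.exists_minimalPrimes_le hIq
  have := hp.1.1
  have lt_of_gt {q' : PrimeSpectrum R} (hpq' : p < q'.asIdeal)
      (hq' : q' ∈ Module.support R ((localCohomology I (m + 1)).obj Y)) :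
      ringKrullDim (R ⧸ q'.asIdeal) < i := by
    by_contra! hle
    exact notMem_support_localCohomology_of_lt hp.1.2 hpq'
      (hm ▸ ringKrullDim_localization_atPrime_le_sub hn hle) Y hq'
  rcases hpq.lt_or_eq with hlt | rfl
  · exact lt_of_gt hlt hq
  · have coheight_gt : (i : ℕ∞) < Order.coheight q := by
      have := hi _ hp
      rw [ringKrullDim_quotient_asIdeal] at this
      exact_mod_cast this
    simp only [Order.coheight_eq_iSup_gt_coheight q, lt_iSup_iff] at coheight_gt
    obtain ⟨q', hqq', hi_lt⟩ := coheight_gt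
    have dim_lt := lt_of_gt hqq' (Module.mem_support_mono (le_of_lt hqq') hq)
    rw [ringKrullDim_quotient_asIdeal] at dim_lt
    exact absurd (Order.le_of_lt_add_one hi_lt) (not_le_of_gt (by exact_mod_cast dim_lt))

lemma mem_of_mem_support_iSup_torsionBy_pow {M : Type*} [AddCommGroup M] [Module R M] {r : R}
    {p : PrimeSpectrum R}
    (hp : p ∈ Module.support R (⨆ k : ℕ, Submodule.torsionBy R M (r ^ k) : Submodule R M)) :
    r ∈ p.asIdeal := by
  obtain ⟨⟨x, hx⟩, smul_ne_zero⟩ := Module.mem_support_iff'.1 hp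
  have directed : Directed (· ≤ ·) fun k : ℕ => Submodule.torsionBy R M (r ^ k) :=
    Monotone.directed_le fun a b hab =>
      Submodule.torsionBy_le_torsionBy_of_dvd _ _ (pow_dvd_pow r hab)
  obtain ⟨k, hk⟩ := (Submodule.mem_iSup_of_directed _ directed).1 hx
  by_contra hr
  exact smul_ne_zero (r ^ k) (fun h => hr (p.2.mem_of_pow_mem k h)) (Subtype.ext hk)

lemma ringKrullDim_quotient_closedPoint (R : Type*) [CommRing R] [IsLocalRing R] :
    ringKrullDim (R ⧸ (closedPoint R).asIdeal) = 0 :=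
  ringKrullDim_eq_zero_of_field (ResidueField R)

end Dimension

end LocalCohomologySupport

open LocalCohomologySupport

theorem support_torsion_localCohomology_dim_le_general {R : Type u} [CommRing R]
    [IsRegularLocalRing R] {n i : ℕ} (hdim : ringKrullDim R = n) (hin : i < n) {I : Ideal R}
    (hi : ∀ p ∈ I.minimalPrimes, i < ringKrullDim (R ⧸ p)) (Y : ModuleCat.{u} R) {r : R}
    (hrmin : Module.support R ((localCohomology I (n - i)).obj Y) ≠ {closedPoint R} →
      ∀ q, Minimal (· ∈ Module.support R ((localCohomology I (n - i)).obj Y)) q → r ∉ q.asIdeal) :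
    ∀ p ∈ Module.support R
        (⨆ k : ℕ, Submodule.torsionBy R ((localCohomology I (n - i)).obj Y) (r ^ k) :
          Submodule R ((localCohomology I (n - i)).obj Y)),
      ringKrullDim (R ⧸ p.asIdeal) ≤ (i - 2 : ℕ) := by
  intro p hp
  have hpH : p ∈ Module.support R ((localCohomology I (n - i)).obj Y) :=
    Module.support_subset_of_injective _ (Submodule.injective_subtype _) hp
  by_cases hsupp : Module.support R ((localCohomology I (n - i)).obj Y) = {closedPoint R}
  · obtain rfl : p = closedPoint R := by rwa [hsupp] at hpH
    rw [ringKrullDim_quotient_closedPoint]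
    exact_mod_cast (i - 2).zero_le
  · obtain ⟨q, hqp, hq⟩ := exists_minimal_le_of_wellFoundedLT _ p hpH
    have hlt : q < p := hqp.lt_of_ne fun h =>
      hrmin hsupp q hq (h ▸ mem_of_mem_support_iSup_torsionBy_pow hp)
    have dim_lt := ringKrullDim_quotient_lt_of_mem_support_localCohomology hdim hin hi Y hq.1
    rw [ringKrullDim_quotient_asIdeal] at dim_lt ⊢
    have coheight_add_two_le : Order.coheight p + 2 ≤ i := by
      rw [← one_add_one_eq_two, ← add_assoc]
      exact Order.add_one_le_of_lt
        ((Order.coheight_add_one_le hlt).trans_lt (by exact_mod_cast dim_lt))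
    refine WithBot.coe_le_coe.2 ?_
    rw [ENat.natCast_sub]
    exact ENat.le_sub_of_add_le_right (ENat.natCast_ne_top 2) coheight_add_two_le

/-- Let `(R, m)` be a regular local ring of dimension `n`, `I` an ideal with `R/I`
equidimensional of dimension `d ≥ 2`, and `1 ≤ i ≤ d - 1`.  Suppose `r ∈ m` is such
that if `Supp H^{n-i}_I(R) ≠ {m}`, then `r` lies in no minimal member of
`Supp H^{n-i}_I(R)`.  Then `dim Supp H^0_{(r)}(H^{n-i}_I(R)) ≤ max {0, i - 2}`. -/
theorem support_torsion_localCohomology_dim_le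
    (R : Type u) [CommRing R] [IsLocalRing R] [IsNoetherianRing R]
    (n : ℕ) (hdim : ringKrullDim R = (n : ℕ))
    (hreg : ∃ s : Finset R, Ideal.span (s : Set R) = maximalIdeal R ∧ s.card = n)
    (I : Ideal R) (d : ℕ) (hd : 2 ≤ d)
    (hdimI : ringKrullDim (R ⧸ I) = (d : ℕ))
    (hequi : ∀ p ∈ I.minimalPrimes, ringKrullDim (R ⧸ p) = (d : ℕ))
    (i : ℕ) (hi1 : 1 ≤ i) (hid : i ≤ d - 1)
    (r : R) (hr : r ∈ maximalIdeal R)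
    (hrmin : Module.support R ((localCohomology I (n - i)).obj (ModuleCat.of R R)) ≠
        {closedPoint R} →
      ∀ q, Minimal (· ∈ Module.support R
          ((localCohomology I (n - i)).obj (ModuleCat.of R R))) q →
        r ∉ q.asIdeal) :
    ∀ p ∈ Module.support R
        (⨆ k : ℕ, Submodule.torsionBy R
          ((localCohomology I (n - i)).obj (ModuleCat.of R R)) (r ^ k) :
          Submodule R ((localCohomology I (n - i)).obj (ModuleCat.of R R))),
      ringKrullDim (R ⧸ p.asIdeal) ≤ ((max 0 (i - 2) : ℕ) : ℕ) := by
  obtain ⟨s, hspan, hcard⟩ := hreg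
  have := (isRegularSystemOfParameters_of_card_le hspan (by rw [hcard, hdim])).isRegularLocalRing
  have hdn : d ≤ n := by exact_mod_cast hdimI ▸ hdim ▸ ringKrullDim_quotient_le I
  simpa only [Nat.zero_max] using support_torsion_localCohomology_dim_le_general hdim
    (by lia) (fun p hp => hequi p hp ▸ mod_cast (by lia : i < d)) _ hrmin
end
end
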